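/- arXiv:0903.4601 — 3 statements merged into one kernel-verified Lean document; each statement's English description precedes it below -/
import Mathlib

section
/- Non-Commutative Cycle Lemma: Let w be a word of length n in the letters u_1^{±1}, ..., u_N^{±1} whose cyclic reduction has length k ≥ 1. Then exactly k of the n cyclic permutations of w have good reduction. -/
/-!
The number of good rotations of a word turns out to be an invariant of the conjugacy class of its
image in the free group. Since every rotation of a cyclically reduced word `v` is good, this number
is `v.length` for all words conjugate to `v`.

For the invariance it suffices to compare `x x⁻¹ m` with `m`. The rotation `x x⁻¹ m` is bad, and for
`m = q p` with `p` nonempty, the rotation `p x x⁻¹ q` is good iff `p q` is good and `p ≠ x⁻¹` in the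
free group. So the insertion loses those good rotations `p q` for which `p = x⁻¹`. There is at most
one of them, since two would differ by a prefix equal to `1`, and there is one iff the remaining
rotation `x⁻¹ m x` is good, so that the loss is made up for.

This last equivalence uses that the Cayley graph is a tree: a path passes through every vertex of
the geodesic between its endpoints, so a path which does not return to its starting point begins
with the first edge of that geodesic.
-/

namespace NCC

/-- A letter `u_i^{±1}`: a generator index together with a sign. -/
abbrev Letter (N : ℕ) := Fin N × Bool

/-- The inverse of a letter. -/
def linv {N : ℕ} (l : Letter N) : Letter N := (l.1, !l.2)

/-- One cyclic reduction step: either a linear reduction step (removal of two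
adjacent letters which are inverses of each other), or removal of the first and
last letters when they are inverses of each other. -/
def CyclicStep {N : ℕ} (w w' : List (Letter N)) : Prop :=
  FreeGroup.Red.Step w w' ∨
    ∃ (l : Letter N) (m : List (Letter N)), w = l :: (m ++ [linv l]) ∧ w' = m

/-- `w` reduces cyclically (in zero or more steps) to `v`. -/
def CycReducesTo {N : ℕ} (w v : List (Letter N)) : Prop :=
  Relation.ReflTransGen CyclicStep w v

/-- A word is linearly reduced when no two adjacent letters are inverses of
each other. -/
def LinReduced {N : ℕ} (w : List (Letter N)) : Prop :=
  List.Chain' (fun a b => b ≠ linv a) w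

/-- A word is cyclically reduced iff `w ++ w` is linearly reduced, i.e. it is
linearly reduced and its last letter is not the inverse of its first letter. -/
def CycReduced {N : ℕ} (w : List (Letter N)) : Prop :=
  LinReduced (w ++ w)

/-- A word is reducible to 1 if it linearly reduces to the empty word. -/
def ReducibleToOne {N : ℕ} (w : List (Letter N)) : Prop :=
  FreeGroup.Red w []

/-- A word has good reduction: no nonempty prefix is reducible to 1, and its
linear reduction is cyclically reduced. -/
def GoodReduction {N : ℕ} (w : List (Letter N)) : Prop :=
  (∀ s, s <+: w → s ≠ [] → ¬ ReducibleToOne s) ∧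
    CycReduced (FreeGroup.reduce w)

/-- The first `i` letters of the infinite word `w_∞ = w w w ⋯`. -/
def infTake {N : ℕ} (w : List (Letter N)) (i : ℕ) : List (Letter N) :=
  ((List.replicate i w).flatten).take i

section

open FreeGroup

variable {α : Type*}

lemma mk_singleton_not (a : α) (b : Bool) : mk [(a, !b)] = (mk [(a, b)])⁻¹ := rfl

lemma mk_cons_cons_not (a : α) (b : Bool) (w : List (α × Bool)) :
    mk ((a, b) :: (a, !b) :: w) = mk w :=
  Quot.sound Red.Step.cons_not

lemma mk_conj_eq_of_mk_eq_inv {a : α} {b : Bool} {p : List (α × Bool)}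
    (hp : mk p = (mk [(a, b)])⁻¹) (q : List (α × Bool)) :
    mk ((a, !b) :: (q ++ p) ++ [(a, b)]) = mk (p ++ q) := by
  rw [List.cons_append, ← List.singleton_append]
  simp only [← mul_mk, mk_singleton_not, hp, mul_assoc, inv_mul_cancel, mul_one]

lemma mk_eq_of_red {w w' : List (α × Bool)} (h : Red w w') : mk w = mk w' :=
  Red.exact.2 ⟨w', h, .refl⟩

lemma isCyclicallyReduced_iff_isReduced_append_self {w : List (α × Bool)} :
    IsCyclicallyReduced w ↔ FreeGroup.IsReduced (w ++ w) := by
  simp only [isCyclicallyReduced_iff, FreeGroup.IsReduced, List.isChain_append, ← and_assoc,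
    and_self]

lemma isCyclicallyReduced_append_comm {p q : List (α × Bool)}
    (h : IsCyclicallyReduced (q ++ p)) : IsCyclicallyReduced (p ++ q) :=
  isCyclicallyReduced_iff_isReduced_append_self.2 <|
    (h.flatten_replicate 3).isReduced.infix ⟨q, p, by simp [List.replicate]⟩

lemma isCyclicallyReduced_of_isRotated {w w' : List (α × Bool)} (h : w ~r w')
    (hw : IsCyclicallyReduced w) : IsCyclicallyReduced w' := by
  obtain ⟨n, hn, rfl⟩ := List.isRotated_iff_mod.1 h
  rw [List.rotate_eq_drop_append_take hn]
  exact isCyclicallyReduced_append_comm (by rwa [List.take_append_drop])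

lemma exists_append_of_reduce_eq_append [DecidableEq α] {w r₁ r₂ : List (α × Bool)}
    (h : reduce w = r₁ ++ r₂) : ∃ w₁ w₂, w = w₁ ++ w₂ ∧ mk w₁ = mk r₁ ∧ mk w₂ = mk r₂ := by
  obtain ⟨w₁, w₂, hw, h₁, h₂⟩ := Red.to_append_iff.1 (h ▸ reduce.red)
  exact ⟨w₁, w₂, hw, mk_eq_of_red h₁, mk_eq_of_red h₂⟩

lemma head?_toWord_inv_ne [DecidableEq α] {g : FreeGroup α} (hg : IsCyclicallyReduced g.toWord)
    (hg₁ : g ≠ 1) : g⁻¹.toWord.head? ≠ g.toWord.head? := by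
  have hne : g.toWord ≠ [] := toWord_eq_nil_iff.not.2 hg₁
  have hends := hg.2 _ (List.getLast?_eq_some_getLast hne) _ (List.head?_eq_some_head hne)
  rw [toWord_inv, invRev, List.head?_reverse, List.getLast?_map,
    List.getLast?_eq_some_getLast hne, List.head?_eq_some_head hne]
  intro h
  obtain ⟨hfst, hsnd⟩ := Prod.ext_iff.1 (Option.some.inj h)
  simp [← hends hfst] at hsnd

/-- No nonempty prefix of `w` is trivial in the free group: the path spelled by `w` in the Cayley
graph never returns to its starting point. -/
def NoTrivialPrefix (w : List (α × Bool)) : Prop :=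
  ∀ s, s <+: w → s ≠ [] → mk s ≠ 1

namespace NoTrivialPrefix

variable {p q w : List (α × Bool)}

lemma of_prefix (h : NoTrivialPrefix w) (hp : p <+: w) : NoTrivialPrefix p :=
  fun s hs => h s (hs.trans hp)

lemma singleton (x : α × Bool) : NoTrivialPrefix [x] := by
  classical
  intro s hs hne h
  obtain rfl : s = [x] := by simpa [List.prefix_cons_iff, hne] using hs
  simpa using congrArg toWord h

lemma of_isReduced (h : FreeGroup.IsReduced w) : NoTrivialPrefix w := by
  classical
  intro s hs hne hs₁
  apply hne
  rw [← (h.infix hs.isInfix).reduce_eq, ← toWord_mk, hs₁, toWord_one]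

lemma append_iff (hp : p ≠ []) :
    NoTrivialPrefix (p ++ q) ↔ NoTrivialPrefix p ∧ ∀ s, s <+: q → mk p * mk s ≠ 1 := by
  simp only [mul_mk]
  refine ⟨fun h => ⟨h.of_prefix (List.prefix_append p q), fun s hs =>
    h _ ((List.prefix_append_right_inj p).2 hs) (by simp [hp])⟩, fun ⟨hnt, hq⟩ s hs hne => ?_⟩
  rcases List.prefix_or_prefix_of_prefix hs (List.prefix_append p q) with hsp | ⟨t, rfl⟩
  · exact hnt s hsp hne
  · exact hq t ((List.prefix_append_right_inj p).1 hs)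

lemma insert_iff (hp : p ≠ []) (a : α) (b : Bool) :
    NoTrivialPrefix (p ++ (a, b) :: (a, !b) :: q) ↔
      NoTrivialPrefix (p ++ q) ∧ mk p ≠ (mk [(a, b)])⁻¹ := by
  rw [append_iff hp, append_iff hp]
  constructor
  · rintro ⟨hnt, h⟩
    refine ⟨⟨hnt, fun s hs => ?_⟩, fun hpx => h [(a, b)] ⟨_, rfl⟩ (mul_eq_one_iff_eq_inv.2 hpx)⟩
    simpa only [mk_cons_cons_not] using h ((a, b) :: (a, !b) :: s) (by simpa using hs)
  · rintro ⟨⟨hnt, h⟩, hpx⟩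
    refine ⟨hnt, fun s hs => ?_⟩
    rcases s with _ | ⟨x, _ | ⟨y, s⟩⟩
    · exact h [] List.nil_prefix
    · obtain rfl : x = (a, b) := (List.cons_prefix_cons.1 hs).1
      exact mt mul_eq_one_iff_eq_inv.1 hpx
    · simp only [List.cons_prefix_cons] at hs
      obtain ⟨rfl, rfl, hs⟩ := hs
      rw [mk_cons_cons_not]
      exact h s hs

lemma head?_reduce [DecidableEq α] (h : NoTrivialPrefix w) : (reduce w).head? = w.head? := by
  rcases w with _ | ⟨⟨a, b⟩, t⟩
  · rfl
  rw [reduce.cons]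
  rcases hr : reduce t with _ | ⟨⟨a', b'⟩, r⟩
  · rfl
  dsimp only
  split_ifs with hcancel
  · obtain ⟨rfl, rfl⟩ := hcancel
    obtain ⟨t₁, t₂, rfl, ht₁, -⟩ := exists_append_of_reduce_eq_append (r₁ := [(a, b')]) hr
    have htriv : mk ((a, !b') :: t₁) = 1 := by
      rw [← List.singleton_append, ← mul_mk, ht₁, mk_singleton_not, inv_mul_cancel]
    exact (h _ ⟨t₂, rfl⟩ (List.cons_ne_nil _ _) htriv).elim
  · rfl

lemma injOn_mk_drop (w : List (α × Bool)) :
    Set.InjOn (fun i => mk (w.drop i)) {i | i < w.length ∧ NoTrivialPrefix (w.rotate i)} := by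
  intro i hi j hj hij
  wlog hlt : i < j generalizing i j
  · by_contra hne
    exact hne (this hj hi hij.symm (by omega)).symm
  have hdrop : NoTrivialPrefix (w.drop i) :=
    hi.2.of_prefix ⟨w.take i, (List.rotate_eq_drop_append_take hi.1.le).symm⟩
  have hsplit : (w.drop i).take (j - i) ++ w.drop j = w.drop i := by
    rw [← Nat.add_sub_cancel' hlt.le, ← List.drop_drop, Nat.add_sub_cancel_left,
      List.take_append_drop]
  have hne : (w.drop i).take (j - i) ≠ [] := by
    have hjw : j < w.length := hj.1
    simp only [ne_eq, List.take_eq_nil_iff, List.drop_eq_nil_iff]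
    omega
  refine (hdrop _ ⟨_, hsplit⟩ hne ?_).elim
  dsimp only at hij
  rwa [← hsplit, ← mul_mk, mul_eq_right] at hij

end NoTrivialPrefix

lemma exists_eq_append_noTrivialPrefix (w : List (α × Bool)) :
    ∃ s p, w = s ++ p ∧ mk s = 1 ∧ NoTrivialPrefix p := by
  by_cases hw : NoTrivialPrefix w
  · exact ⟨[], w, rfl, one_eq_mk.symm, hw⟩
  simp only [NoTrivialPrefix, not_forall, not_not] at hw
  obtain ⟨s, ⟨t, rfl⟩, hne, hs⟩ := hw
  have : 0 < s.length := List.length_pos_iff.2 hne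
  obtain ⟨s', p, rfl, hs', hp⟩ := exists_eq_append_noTrivialPrefix t
  exact ⟨s ++ s', p, (List.append_assoc _ _ _).symm, by rw [← mul_mk, hs, hs', one_mul], hp⟩
termination_by w.length
decreasing_by
  subst w
  simpa

variable [DecidableEq α]

/-- The notion of good reduction, over an arbitrary alphabet `α` and in terms of the free group
(see `goodReduction_iff` for the comparison with `GoodReduction`). -/
def HasGoodReduction (w : List (α × Bool)) : Prop :=
  NoTrivialPrefix w ∧ IsCyclicallyReduced (reduce w)

lemma hasGoodReduction_of_isCyclicallyReduced {w : List (α × Bool)} (h : IsCyclicallyReduced w) :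
    HasGoodReduction w :=
  ⟨.of_isReduced h.isReduced, by rwa [h.isReduced.reduce_eq]⟩

lemma HasGoodReduction.noTrivialPrefix_append_self {w : List (α × Bool)}
    (h : HasGoodReduction w) : NoTrivialPrefix (w ++ w) := by
  rcases eq_or_ne w [] with rfl | hw
  · exact h.1
  have hw₁ : mk w ≠ 1 := h.1 w List.prefix_rfl hw
  refine (NoTrivialPrefix.append_iff hw).2 ⟨h.1, fun s hs hws => ?_⟩
  have hhead : s.head? = w.head? := by
    rcases hs with ⟨t, rfl⟩
    rcases s with _ | _
    · exact (hw₁ (by rwa [← one_eq_mk, mul_one] at hws)).elim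
    · rfl
  -- The reduced words of `w` and `w⁻¹ = s` begin with the same letter.
  refine head?_toWord_inv_ne (g := mk w) h.2 hw₁ ?_
  rw [inv_eq_of_mul_eq_one_right hws, toWord_mk, toWord_mk, (h.1.of_prefix hs).head?_reduce,
    h.1.head?_reduce, hhead]

lemma hasGoodReduction_insert_iff {p : List (α × Bool)} (hp : p ≠ []) (a : α) (b : Bool)
    (q : List (α × Bool)) :
    HasGoodReduction (p ++ (a, b) :: (a, !b) :: q) ↔
      HasGoodReduction (p ++ q) ∧ mk p ≠ (mk [(a, b)])⁻¹ := by
  rw [HasGoodReduction, HasGoodReduction, NoTrivialPrefix.insert_iff hp,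
    reduce.Step.eq Red.Step.not, and_right_comm]

section Conjugation

variable {a : α} {b : Bool} {p q : List (α × Bool)}

lemma HasGoodReduction.conj (hp : mk p = (mk [(a, b)])⁻¹) (hp_ne : p ≠ [])
    (h : HasGoodReduction (p ++ q)) : HasGoodReduction ((a, !b) :: (q ++ p) ++ [(a, b)]) := by
  refine ⟨?_, by rw [reduce.sound (mk_conj_eq_of_mk_eq_inv hp q)]; exact h.2⟩
  have hself := h.noTrivialPrefix_append_self
  rw [List.append_assoc, NoTrivialPrefix.append_iff hp_ne] at hself
  rw [List.cons_append, ← List.singleton_append,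
    NoTrivialPrefix.append_iff (List.cons_ne_nil _ _), mk_singleton_not, ← hp]
  refine ⟨.singleton _, fun s hs => ?_⟩
  rcases List.prefix_concat_iff.1 hs with rfl | hs
  · rw [hp, ← mk_singleton_not, mul_mk, List.singleton_append, ← List.cons_append,
      mk_conj_eq_of_mk_eq_inv hp q]
    exact h.1 _ List.prefix_rfl (by simp [hp_ne])
  · exact hself.2 s (hs.trans ⟨q, by simp⟩)

lemma HasGoodReduction.exists_mk_eq_inv_of_conj {m : List (α × Bool)}
    (h : HasGoodReduction ((a, !b) :: m ++ [(a, b)])) :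
    ∃ q p, m = q ++ p ∧ mk p = (mk [(a, b)])⁻¹ := by
  set w := (a, !b) :: m ++ [(a, b)] with hw
  obtain ⟨r, hr⟩ : ∃ r, reduce w = (a, !b) :: r :=
    List.head?_eq_some_iff.1 h.1.head?_reduce
  have hreduced : FreeGroup.IsReduced (reduce w ++ [(a, !b)]) :=
    (isCyclicallyReduced_iff_isReduced_append_self.1 h.2).infix ⟨[], r, by simp [hr]⟩
  have hmk : mk ((a, !b) :: m) = mk (reduce w ++ [(a, !b)]) := by
    rw [← mul_mk, reduce.self, hw, ← mul_mk, mk_singleton_not, mul_inv_cancel_right]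
  obtain ⟨t, p, htp, ht, hp⟩ := exists_append_of_reduce_eq_append
    ((reduce.sound hmk).trans hreduced.reduce_eq)
  rcases List.cons_eq_append_iff.1 htp with ⟨rfl, -⟩ | ⟨q, -, rfl⟩
  · rw [reduce.self] at ht
    exact (h.1 w List.prefix_rfl (by simp [w]) ht.symm).elim
  · exact ⟨q, p, rfl, hp⟩

lemma HasGoodReduction.exists_of_conj {m : List (α × Bool)}
    (h : HasGoodReduction ((a, !b) :: m ++ [(a, b)])) :
    ∃ q p, m = q ++ p ∧ p ≠ [] ∧ mk p = (mk [(a, b)])⁻¹ ∧ HasGoodReduction (p ++ q) := by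
  obtain ⟨q, t, rfl, ht⟩ := h.exists_mk_eq_inv_of_conj
  obtain ⟨s, p, rfl, hs, hp⟩ := exists_eq_append_noTrivialPrefix t
  rw [← mul_mk, hs, one_mul] at ht
  have hp_ne : p ≠ [] := by
    rintro rfl
    exact NoTrivialPrefix.singleton (a, !b) _ List.prefix_rfl (by simp) ht.symm
  rw [← List.append_assoc] at h
  refine ⟨q ++ s, p, (List.append_assoc _ _ _).symm, hp_ne, ht, ?_, ?_⟩
  · have hnt := h.1
    rw [List.cons_append, ← List.singleton_append,
      NoTrivialPrefix.append_iff (List.cons_ne_nil _ _), mk_singleton_not, ← ht] at hnt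
    exact (NoTrivialPrefix.append_iff hp_ne).2
      ⟨hp, fun u hu => hnt.2 u (hu.trans ⟨p ++ [(a, b)], by simp⟩)⟩
  · rw [← reduce.sound (mk_conj_eq_of_mk_eq_inv ht _)]
    exact h.2

lemma hasGoodReduction_conj_iff {m : List (α × Bool)} :
    HasGoodReduction ((a, !b) :: m ++ [(a, b)]) ↔
      ∃ i < m.length, HasGoodReduction (m.rotate i) ∧ mk (m.drop i) = (mk [(a, b)])⁻¹ := by
  constructor
  · intro h
    obtain ⟨q, p, rfl, hp_ne, hp, hpq⟩ := h.exists_of_conj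
    exact ⟨q.length, by simpa [List.length_pos_iff] using hp_ne,
      by rwa [List.rotate_append_length_eq], by rwa [List.drop_left]⟩
  · rintro ⟨i, hi, hgood, hdrop⟩
    rw [List.rotate_eq_drop_append_take hi.le] at hgood
    simpa only [List.take_append_drop] using hgood.conj hdrop (by simpa using hi)

end Conjugation

open scoped Classical in
/-- The number of rotations of `w` with good reduction. Rotations by different `i < w.length` count
separately even if they are equal as words. -/
noncomputable def goodCount (w : List (α × Bool)) : ℕ :=
  Nat.count (fun i => HasGoodReduction (w.rotate i)) w.length

lemma goodCount_of_isCyclicallyReduced {w : List (α × Bool)} (h : IsCyclicallyReduced w) :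
    goodCount w = w.length := by
  classical
  exact Nat.count_iff_forall.2 fun i _ =>
    hasGoodReduction_of_isCyclicallyReduced (isCyclicallyReduced_of_isRotated ⟨i, rfl⟩ h)

lemma goodCount_rotate_one (w : List (α × Bool)) : goodCount (w.rotate 1) = goodCount w := by
  classical
  have hfirst := Nat.count_succ' (fun i => HasGoodReduction (w.rotate i)) w.length
  have hlast := Nat.count_succ (fun i => HasGoodReduction (w.rotate i)) w.length
  simp only [List.rotate_length, List.rotate_zero] at hfirst hlast
  simp only [goodCount, List.length_rotate, List.rotate_rotate, add_comm 1]
  omega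

lemma goodCount_eq_of_isRotated {w w' : List (α × Bool)} (h : w ~r w') :
    goodCount w = goodCount w' := by
  obtain ⟨n, rfl⟩ := h
  induction n with
  | zero => rw [List.rotate_zero]
  | succ n ih => rw [ih, ← List.rotate_rotate, goodCount_rotate_one]

open scoped Classical in
lemma card_hasGoodReduction_mk_drop_eq_inv (a : α) (b : Bool) (m : List (α × Bool)) :
    ((Finset.range m.length).filter fun i =>
      HasGoodReduction (m.rotate i) ∧ mk (m.drop i) = (mk [(a, b)])⁻¹).card =
      if HasGoodReduction ((a, !b) :: m ++ [(a, b)]) then 1 else 0 := by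
  split_ifs with h
  · refine le_antisymm (Finset.card_le_one.2 fun i hi j hj => ?_) (Finset.card_pos.2 ?_)
    · simp only [Finset.mem_filter, Finset.mem_range] at hi hj
      exact NoTrivialPrefix.injOn_mk_drop m ⟨hi.1, hi.2.1.1⟩ ⟨hj.1, hj.2.1.1⟩
        (hi.2.2.trans hj.2.2.symm)
    · obtain ⟨i, hi, hgood⟩ := hasGoodReduction_conj_iff.1 h
      exact ⟨i, Finset.mem_filter.2 ⟨Finset.mem_range.2 hi, hgood⟩⟩
  · rw [Finset.card_eq_zero, Finset.filter_eq_empty_iff]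
    exact fun i hi hgood =>
      h (hasGoodReduction_conj_iff.2 ⟨i, Finset.mem_range.1 hi, hgood⟩)

lemma goodCount_cons_cons_not (a : α) (b : Bool) (m : List (α × Bool)) :
    goodCount ((a, b) :: (a, !b) :: m) = goodCount m := by
  classical
  have hzero : ¬ HasGoodReduction (((a, b) :: (a, !b) :: m).rotate 0) := fun h =>
    h.1 [(a, b), (a, !b)] ⟨m, (List.rotate_zero _).symm⟩ (by simp) (mk_cons_cons_not a b [])
  have hone : ((a, b) :: (a, !b) :: m).rotate (0 + 1) = (a, !b) :: m ++ [(a, b)] := by simp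
  have hinsert : ∀ i < m.length,
      (HasGoodReduction (((a, b) :: (a, !b) :: m).rotate (i + 1 + 1)) ↔
        HasGoodReduction (m.rotate i) ∧ ¬ mk (m.drop i) = (mk [(a, b)])⁻¹) := by
    intro i hi
    rw [List.rotate_eq_drop_append_take hi.le, List.rotate_eq_drop_append_take (by simp; omega)]
    exact hasGoodReduction_insert_iff (by simpa using hi) a b (m.take i)
  rw [goodCount, goodCount, List.length_cons, List.length_cons, Nat.count_succ', Nat.count_succ',
    if_neg hzero, hone, ← card_hasGoodReduction_mk_drop_eq_inv, add_zero,
    Nat.count_eq_card_filter_range, Nat.count_eq_card_filter_range,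
    Finset.filter_congr fun i hi => hinsert i (Finset.mem_range.1 hi), add_comm,
    ← Finset.filter_filter, ← Finset.filter_filter, Finset.card_filter_add_card_filter_not]

lemma goodCount_eq_of_red {w w' : List (α × Bool)} (h : Red w w') :
    goodCount w = goodCount w' := by
  induction h with
  | refl => rfl
  | tail _ hstep ih =>
    rw [ih]
    obtain @⟨p, q, a, b⟩ := hstep
    calc goodCount (p ++ (a, b) :: (a, !b) :: q)
        = goodCount ((a, b) :: (a, !b) :: (q ++ p)) :=
          goodCount_eq_of_isRotated List.isRotated_append
      _ = goodCount (q ++ p) := goodCount_cons_cons_not a b _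
      _ = goodCount (p ++ q) := goodCount_eq_of_isRotated List.isRotated_append

lemma goodCount_eq_of_mk_eq {w w' : List (α × Bool)} (h : mk w = mk w') :
    goodCount w = goodCount w' := by
  rw [goodCount_eq_of_red reduce.red, reduce.sound h, ← goodCount_eq_of_red reduce.red]

lemma goodCount_eq_of_isConj {w w' : List (α × Bool)} (h : IsConj (mk w) (mk w')) :
    goodCount w = goodCount w' := by
  obtain ⟨c, hc⟩ := isConj_iff.1 h
  obtain ⟨u, rfl⟩ : ∃ u, mk u = c := ⟨c.toWord, mk_toWord⟩
  calc goodCount w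
      = goodCount (w ++ invRev u ++ u) :=
        goodCount_eq_of_mk_eq (by rw [← mul_mk, ← mul_mk, ← inv_mk, inv_mul_cancel_right])
    _ = goodCount (u ++ (w ++ invRev u)) := goodCount_eq_of_isRotated List.isRotated_append
    _ = goodCount w' :=
        goodCount_eq_of_mk_eq (by rw [← hc, ← mul_mk, ← mul_mk, ← inv_mk, mul_assoc])

open scoped Classical in
theorem noncommutative_cycle_lemma_general {w v : List (α × Bool)}
    (hv : IsCyclicallyReduced v) (hwv : IsConj (mk w) (mk v)) :
    ((Finset.range w.length).filter fun i => HasGoodReduction (w.rotate i)).card = v.length := by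
  rw [← Nat.count_eq_card_filter_range, ← goodCount_of_isCyclicallyReduced hv,
    ← goodCount_eq_of_isConj hwv, goodCount]

end

section

open FreeGroup

variable {N : ℕ} {w v : List (Letter N)}

lemma CycReducesTo.isConj_mk (h : CycReducesTo w v) : IsConj (mk w) (mk v) := by
  induction h with
  | refl => exact IsConj.refl _
  | tail _ hstep ih =>
    refine ih.trans ?_
    rcases hstep with hred | ⟨x, m, rfl, hm⟩
    · rw [mk_eq_of_red hred.to_red]
    · refine isConj_iff.2 ⟨(mk [x])⁻¹, ?_⟩
      rw [hm, ← List.singleton_append (l := m ++ _), ← mul_mk, ← mul_mk, inv_inv,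
        inv_mul_cancel_left]
      exact inv_mul_cancel_right _ (mk [x])

lemma linReduced_iff : LinReduced w ↔ FreeGroup.IsReduced w := by
  have hrel : (fun x y : Letter N => y ≠ linv x) = fun x y => x.1 = y.1 → x.2 = y.2 := by
    funext ⟨a, b⟩ ⟨a', b'⟩
    cases b <;> cases b' <;> simp [linv, eq_comm]
  exact iff_of_eq (congrArg (fun r => List.IsChain r w) hrel)

lemma cycReduced_iff : CycReduced v ↔ IsCyclicallyReduced v :=
  linReduced_iff.trans isCyclicallyReduced_iff_isReduced_append_self.symm

lemma reducibleToOne_iff : ReducibleToOne w ↔ mk w = 1 := by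
  refine ⟨mk_eq_of_red, fun h => ?_⟩
  have hred : Red w (reduce w) := reduce.red
  rwa [← toWord_mk, h, toWord_one] at hred

lemma goodReduction_iff : GoodReduction w ↔ HasGoodReduction w := by
  simp only [GoodReduction, HasGoodReduction, NoTrivialPrefix, reducibleToOne_iff, cycReduced_iff]

end

open scoped Classical in
/-- **The Non-Commutative Cycle Lemma.** If `w` is a word whose cyclic
reduction has length `k ≥ 1`, then exactly `k` of the cyclic permutations
`w.rotate i`, `0 ≤ i < n`, of `w` have good reduction. -/
theorem noncommutative_cycle_lemma (N k : ℕ) (hk : 1 ≤ k)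
    (w v : List (Letter N)) (hred : CycReducesTo w v) (hvc : CycReduced v)
    (hvk : v.length = k) :
    ((Finset.range w.length).filter (fun i => GoodReduction (w.rotate i))).card = k := by
  simpa only [goodReduction_iff, hvk] using
    noncommutative_cycle_lemma_general (cycReduced_iff.1 hvc) hred.isConj_mk

end NCC
end

section
/- Let k ≥ 1 and let v be a cyclically reduced word of length k in the letters u_1^{±1}, ..., u_N^{±1}. The number of words of length n whose standard cyclic reduction is v equals (2N-1)^{(n-k)/2} · C(n, (n-k)/2) when n - k is even and nonnegative (and is 0 otherwise). In particular, this number does not depend on v. -/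
/-!
Lift a non-crossing half-pairing on `[n]` to the universal cover `ℤ` of the cycle, where it becomes
an `n`-periodic arc diagram; a point is then oriented out when it is a through string or the left
end of an arc. If the half-pairing is admissible, a point is oriented out exactly when appending its
letter to a long enough past in the periodic word `⋯ w w w ⋯` lengthens the reduced word of that
past. The last letter of this reduced word does not depend on where a long past begins, so the
admissible half-pairing is unique.

Half-pairings with `m` pairs are determined by their `m` inward positions, and every choice of `m`
positions with `2 * m < n` occurs: the walk on `ℤ` with down-steps at these positions and up-steps
elsewhere is periodic with positive drift, so each of its down-steps undoes an earlier up-step. This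
gives the factor `n.choose m`.

Finally fix the half-pairing and the letters at its through strings, and go through the other
positions from left to right, starting at a through string: the letter of an inward position is
forced by its partner, while the left end of an arc may carry every letter but the inverse of the
one covering it. Hence `m` positions have `2 * N - 1` choices each. The conditions where one through
string covers another hold because the word of the through strings is cyclically reduced.
-/

namespace NCC

open scoped Classical

/-- `i` and `j` lie in a common block of the partition `P`. -/
def Rel {n : ℕ} (P : Finpartition (Finset.univ : Finset (Fin n))) (i j : Fin n) : Prop :=
  ∃ B ∈ P.parts, i ∈ B ∧ j ∈ B

/-- `i` lies in a singleton block of `P`. -/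
def IsSingleton {n : ℕ} (P : Finpartition (Finset.univ : Finset (Fin n))) (i : Fin n) : Prop :=
  ∃ B ∈ P.parts, i ∈ B ∧ B.card = 1

/-- The relation of the partition `π̃` obtained from `P` by merging all
singleton blocks into a single block. -/
def RelTilde {n : ℕ} (P : Finpartition (Finset.univ : Finset (Fin n))) (i j : Fin n) : Prop :=
  Rel P i j ∨ (IsSingleton P i ∧ IsSingleton P j)

/-- An equivalence-like relation on `[n]` is non-crossing when there are no
`i₁ < i₂ < i₃ < i₄` with `i₁ ∼ i₃`, `i₂ ∼ i₄` but `i₁ ≁ i₂`. -/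
def NonCrossingRel {n : ℕ} (r : Fin n → Fin n → Prop) : Prop :=
  ∀ i1 i2 i3 i4 : Fin n, i1 < i2 → i2 < i3 → i3 < i4 → r i1 i3 → r i2 i4 → r i1 i2

/-- A non-crossing half-pairing on `[n]`: a non-crossing partition all of whose
blocks have at most two elements, with at least one singleton block (through
string), such that merging all singleton blocks still gives a non-crossing
partition. -/
structure HalfPairing (n : ℕ) where
  P : Finpartition (Finset.univ : Finset (Fin n))
  card_le : ∀ B ∈ P.parts, B.card ≤ 2
  exists_singleton : ∃ i, IsSingleton P i
  nc : NonCrossingRel (Rel P)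
  nc_tilde : NonCrossingRel (RelTilde P)

/-- `r` and `s` form a pair (a two-element block) of `π`. -/
def Pairs {n : ℕ} (π : HalfPairing n) (r s : Fin n) : Prop :=
  r ≠ s ∧ Rel π.P r s

/-- Membership in the cyclic interval `[i, j]` (going clockwise from `i` to
`j`, endpoints included). -/
def InCyc {n : ℕ} (i j x : Fin n) : Prop :=
  (x.val + n - i.val) % n ≤ (j.val + n - i.val) % n

/-- Cyclic successor of `i` in `[n]`. -/
def cnext {n : ℕ} (i : Fin n) : Fin n :=
  ⟨(i.val + 1) % n, Nat.mod_lt _ i.pos⟩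

/-- Cyclic predecessor of `i` in `[n]`. -/
def cprev {n : ℕ} (i : Fin n) : Fin n :=
  ⟨(i.val + n - 1) % n, Nat.mod_lt _ i.pos⟩

/-- `a + j` modulo `n`. -/
def cadd {n : ℕ} (a j : Fin n) : Fin n :=
  ⟨(a.val + j.val) % n, Nat.mod_lt _ a.pos⟩

/-- `x - a` modulo `n`. -/
def csub {n : ℕ} (x a : Fin n) : Fin n :=
  ⟨(x.val + n - a.val) % n, Nat.mod_lt _ a.pos⟩

/-- `i` has the outward orientation: it is a singleton, or it is the point of a
pair `(i, s)` such that the cyclic interval `[i, s]` contains no singleton. -/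
def OutOriented {n : ℕ} (π : HalfPairing n) (i : Fin n) : Prop :=
  IsSingleton π.P i ∨
    ∃ s, Pairs π i s ∧ ∀ x, InCyc i s x → ¬ IsSingleton π.P x

/-- `i` covers `j`: both are outward oriented, and either `j` is the cyclic
successor of `i`, or `π` pairs each point of the cyclic interval
`[i+1, j-1]` with another point of `[i+1, j-1]`. -/
def Covers {n : ℕ} (π : HalfPairing n) (i j : Fin n) : Prop :=
  OutOriented π i ∧ OutOriented π j ∧
    (j = cnext i ∨
      ∀ x, InCyc (cnext i) (cprev j) x →
        ∃ y, y ≠ x ∧ InCyc (cnext i) (cprev j) y ∧ Pairs π x y)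

/-- The set of through strings (singleton blocks) of `π`. -/
noncomputable def throughFinset {n : ℕ} (π : HalfPairing n) : Finset (Fin n) :=
  Finset.univ.filter (fun i => IsSingleton π.P i)

/-- The word formed by the letters of `w` at the through strings of `π`,
read in increasing order of position. -/
noncomputable def throughWord {n N : ℕ} (w : Fin n → Letter N) (π : HalfPairing n) :
    List (Letter N) :=
  ((throughFinset π).sort (· ≤ ·)).map w

/-- `π` is a `w`-pairing: paired positions carry mutually inverse letters, and
the through-string letters, read in order, form a cyclic reduction of `w`. -/
def IsWPairing {n N : ℕ} (w : Fin n → Letter N) (π : HalfPairing n) : Prop :=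
  (∀ r s, Pairs π r s → w r = linv (w s)) ∧
    CycReducesTo (List.ofFn w) (throughWord w π) ∧ CycReduced (throughWord w π)

/-- `π` is `w`-admissible: it is a `w`-pairing and `l_i ≠ l_j⁻¹` whenever
`i` covers `j`. -/
def Admissible {n N : ℕ} (w : Fin n → Letter N) (π : HalfPairing n) : Prop :=
  IsWPairing w π ∧ ∀ i j, Covers π i j → w i ≠ linv (w j)

/-- `v` is the standard cyclic reduction of `w`: the through-string word of
the (unique) `w`-admissible non-crossing half-pairing. -/
def StandardCycRed {n N : ℕ} (w : Fin n → Letter N) (v : List (Letter N)) : Prop :=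
  ∃ π : HalfPairing n, Admissible w π ∧ throughWord w π = v

/-! ### Letters and reduced words -/

section Words

variable {N : ℕ}

@[simp]
theorem linv_linv (l : Letter N) : linv (linv l) = l := by
  simp [linv]

theorem eq_linv_comm {l l' : Letter N} : l = linv l' ↔ l' = linv l := by
  constructor <;> rintro rfl <;> simp

theorem red_cons_linv (l : Letter N) (w : List (Letter N)) :
    FreeGroup.Red (l :: linv l :: w) w :=
  FreeGroup.Red.Step.cons_not.to_red

theorem isReduced_concat_concat {u : List (Letter N)} {a b : Letter N}
    (hu : FreeGroup.IsReduced (u ++ [a])) (hab : b ≠ linv a) :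
    FreeGroup.IsReduced ((u ++ [a]) ++ [b]) := by
  refine List.IsChain.append hu (List.isChain_singleton b) ?_
  rintro x hx y hy h
  obtain rfl : a = x := by simpa using hx
  obtain rfl : b = y := by simpa using hy
  by_contra hne
  exact hab (Prod.ext h.symm (by simpa [linv, Bool.eq_not] using Ne.symm hne))

theorem CycReducesTo.of_red {w w' : List (Letter N)} (h : FreeGroup.Red w w') :
    CycReducesTo w w' :=
  Relation.ReflTransGen.mono (fun _ _ => Or.inl) _ _ h

theorem CycReducesTo.cons_concat_linv (l : Letter N) (w : List (Letter N)) :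
    CycReducesTo (l :: (w ++ [linv l])) w :=
  .single (.inr ⟨l, w, rfl, rfl⟩)

theorem CycReduced.ne_linv_of_infix {v : List (Letter N)} {a b : Letter N} (hv : CycReduced v)
    (hab : [a, b] <:+: v ++ v) : b ≠ linv a := by
  have hchain : List.IsChain (fun a b => b ≠ linv a) [a, b] := List.IsChain.infix hv hab
  simpa using hchain

end Words

section FreeGroup

variable {α : Type*} [DecidableEq α]

theorem toWord_mk_singleton_mul (a : α × Bool) (x : FreeGroup α) :
    (FreeGroup.mk [a] * x).toWord = a :: x.toWord ∨
      ∃ b, x.toWord = b :: (FreeGroup.mk [a] * x).toWord := by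
  rw [FreeGroup.toWord_mul, FreeGroup.toWord_mk, FreeGroup.reduce_singleton, List.singleton_append,
    FreeGroup.reduce.cons, FreeGroup.reduce_toWord]
  cases x.toWord with
  | nil => exact .inl rfl
  | cons b u => by_cases h : a.1 = b.1 ∧ a.2 = !b.2 <;> simp [h]

theorem exists_common_suffix_toWord_mul (L : List (α × Bool)) (x : FreeGroup α) :
    ∃ v, v <:+ x.toWord ∧ v <:+ (FreeGroup.mk L * x).toWord ∧ x.norm ≤ v.length + L.length := by
  induction L with
  | nil =>
    exact ⟨x.toWord, List.suffix_rfl, by simp [← FreeGroup.one_eq_mk], by simp [FreeGroup.norm]⟩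
  | cons a L ih =>
    obtain ⟨v, hvx, hvL, hlen⟩ := ih
    have hmul : FreeGroup.mk (a :: L) * x = FreeGroup.mk [a] * (FreeGroup.mk L * x) := by
      rw [← mul_assoc, FreeGroup.mul_mk, List.singleton_append]
    refine ⟨v.tail, (List.tail_suffix v).trans hvx, ?_, by grind⟩
    rw [hmul]
    obtain h | ⟨b, h⟩ := toWord_mk_singleton_mul a (FreeGroup.mk L * x)
    · rw [h]
      exact ((List.tail_suffix v).trans hvL).trans (List.suffix_cons _ _)
    · rw [h] at hvL
      obtain rfl | hvL := List.suffix_cons_iff.1 hvL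
      · exact List.suffix_rfl
      · exact (List.tail_suffix v).trans hvL

theorem getLast?_toWord_mul {h x : FreeGroup α} (hx : h.norm < x.norm) :
    (h * x).toWord.getLast? = x.toWord.getLast? := by
  obtain ⟨v, ⟨u, hu⟩, ⟨u', hu'⟩, hlen⟩ := exists_common_suffix_toWord_mul h.toWord x
  rw [FreeGroup.mk_toWord] at hu'
  have hv : v ≠ [] := by
    rintro rfl
    exact absurd hlen (by simpa [FreeGroup.norm] using hx)
  rw [← hu, ← hu', List.getLast?_append_of_ne_nil _ hv, List.getLast?_append_of_ne_nil _ hv]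

end FreeGroup

section Range

theorem range_eq_nil {a b : ℤ} (h : b ≤ a) : Int.range a b = [] := by
  simp [Int.range, h]

theorem range_append {a b c : ℤ} (hab : a ≤ b) (hbc : b ≤ c) :
    Int.range a b ++ Int.range b c = Int.range a c := by
  obtain ⟨k, rfl⟩ := Int.le.dest hab
  obtain ⟨m, rfl⟩ := Int.le.dest hbc
  have hk : (a + k - a).toNat = k := by lia
  have hm : (a + k + m - (a + k)).toNat = m := by lia
  have hkm : (a + k + m - a).toNat = k + m := by lia
  simp only [Int.range, hk, hm, hkm, List.range_add]
  simp [add_assoc]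

theorem range_succ_self (a : ℤ) : Int.range a (a + 1) = [a] := by
  simp [Int.range]

theorem range_eq_cons {a b : ℤ} (h : a < b) : Int.range a b = a :: Int.range (a + 1) b := by
  rw [← range_append (by lia) (Int.add_one_le_of_lt h), range_succ_self, List.singleton_append]

theorem range_add (a b m : ℤ) : Int.range (a + m) (b + m) = (Int.range a b).map (· + m) := by
  simp [Int.range, add_right_comm]

end Range

/-! ### Periodic arc diagrams on the integers -/

/-- The lift of a non-crossing half-pairing on `[n]` to the universal cover `ℤ` of the cycle:
an `n`-periodic involution `mate`, whose fixed points are the through strings, such that no through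
string and no other arc crosses the arc from `t` to `mate t`. -/
@[ext]
structure ArcDiagram (n : ℕ) where
  mate : ℤ → ℤ
  mate_mate : ∀ t, mate (mate t) = t
  mate_add : ∀ t, mate (t + n) = mate t + n
  nested : ∀ {t u}, t < u → u < mate t → t < mate u ∧ mate u < mate t ∧ mate u ≠ u
  exists_fixed : ∃ t, mate t = t

namespace ArcDiagram

variable {n : ℕ} (D : ArcDiagram n)

/-- The lifted through strings. -/
def Through (t : ℤ) : Prop := D.mate t = t

/-- The outward oriented points: on the line these are the through strings and the left ends of
arcs. -/
def Out (t : ℤ) : Prop := t ≤ D.mate t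

/-- Every point of `[a, b)` is joined by an arc to another point of `[a, b)`. -/
def Closed (a b : ℤ) : Prop :=
  ∀ t, a ≤ t → t < b → a ≤ D.mate t ∧ D.mate t < b ∧ D.mate t ≠ t

/-- The covering relation of half-pairings, extended to targets `t` of any orientation: the point
covering an inward `t` is the other end of its arc. -/
def Covers (i t : ℤ) : Prop :=
  i < t ∧ D.Out i ∧ D.Closed (i + 1) t

variable {D}

theorem mate_add_mul (t q : ℤ) : D.mate (t + q * n) = D.mate t + q * n := by
  induction q with
  | zero => simp
  | succ k ih => rw [add_one_mul, ← add_assoc, D.mate_add, ih, add_assoc]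
  | pred k ih =>
    have h := D.mate_add (t + (-k - 1) * n)
    rw [show t + (-k - 1 : ℤ) * n + n = t + -k * n by ring, ih] at h
    linarith

theorem through_add_mul {t q : ℤ} : D.Through (t + q * n) ↔ D.Through t := by
  simp [Through, mate_add_mul]

theorem out_add_mul {t q : ℤ} : D.Out (t + q * n) ↔ D.Out t := by
  simp [Out, mate_add_mul]

theorem Covers.add_mul {i t : ℤ} (h : D.Covers i t) (q : ℤ) : D.Covers (i + q * n) (t + q * n) := by
  obtain ⟨hit, hi, hc⟩ := h
  refine ⟨by lia, out_add_mul.2 hi, fun u hiu hut => ?_⟩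
  have hu := hc (u + -q * n) (by lia) (by lia)
  rw [mate_add_mul] at hu
  grind

theorem Through.out {t : ℤ} (h : D.Through t) : D.Out t :=
  h.ge

theorem not_out {t : ℤ} : ¬D.Out t ↔ D.mate t < t :=
  not_le

theorem through_notMem_arc {s t : ℤ} (hs : D.Through s) : ¬(t < s ∧ s ≤ D.mate t) := by
  rintro ⟨hts, hst⟩
  obtain h | rfl := hst.lt_or_eq
  · exact (D.nested hts h).2.2 hs
  · rw [Through, D.mate_mate] at hs
    lia

theorem exists_through_add [NeZero n] (a : ℤ) : ∃ t, a ≤ t ∧ t < a + n ∧ D.Through t := by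
  obtain ⟨s, hs⟩ := D.exists_fixed
  have hn : (0 : ℤ) < n := by exact_mod_cast NeZero.pos n
  refine ⟨(s - a) % n + a, by have := Int.emod_nonneg (s - a) hn.ne'; lia,
    by have := Int.emod_lt_of_pos (s - a) hn; lia, ?_⟩
  have hmod := Int.emod_add_ediv_mul (s - a) n
  rwa [show (s - a) % n + a = s + -((s - a) / n) * n by linarith, through_add_mul]

theorem mate_lt [NeZero n] (t : ℤ) : D.mate t < t + n := by
  obtain ⟨s, hts, hst, hs⟩ := D.exists_through_add (t + 1)
  by_contra! h
  exact through_notMem_arc hs ⟨hts, by lia⟩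

theorem lt_mate [NeZero n] (t : ℤ) : t < D.mate t + n := by
  simpa [D.mate_mate] using D.mate_lt (D.mate t)

theorem Closed.append {a b c : ℤ} (hab : D.Closed a b) (hbc : D.Closed b c) (h : a ≤ b)
    (h' : b ≤ c) : D.Closed a c := by
  intro t hat htc
  obtain htb | hbt := lt_or_ge t b
  · have := hab t hat htb; grind
  · have := hbc t hbt htc; grind

theorem Closed.add {a b : ℤ} (h : D.Closed a b) : D.Closed (a + n) (b + n) := by
  intro t hat htb
  have ht := h (t - n) (by lia) (by lia)
  have hmate := D.mate_add (t - n)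
  rw [sub_add_cancel] at hmate
  grind

theorem Closed.right {a b c : ℤ} (hac : D.Closed a c) (hab : D.Closed a b) (h : a ≤ b) :
    D.Closed b c := by
  intro t hbt htc
  have ht := hac t (h.trans hbt) htc
  refine ⟨?_, ht.2⟩
  by_contra! hlt
  have hmate := hab _ ht.1 hlt
  rw [D.mate_mate] at hmate
  lia

theorem Closed.left {a b c : ℤ} (hac : D.Closed a c) (hbc : D.Closed b c) (h : b ≤ c) :
    D.Closed a b := by
  intro t hat htb
  have ht := hac t hat (htb.trans_le h)
  refine ⟨ht.1, ?_, ht.2.2⟩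
  by_contra! hle
  have hmate := hbc _ hle ht.2.1
  rw [D.mate_mate] at hmate
  lia

theorem Closed.nil (a : ℤ) : D.Closed a a :=
  fun _ h h' => absurd h h'.not_ge

theorem closed_interior (t : ℤ) : D.Closed (t + 1) (D.mate t) := by
  intro u htu hut
  have hu := D.nested (t := t) (u := u) (by lia) hut
  exact ⟨by lia, hu.2⟩

theorem closed_arc {t : ℤ} (ht : t < D.mate t) : D.Closed t (D.mate t + 1) := by
  intro u htu hut
  obtain rfl | htu := htu.eq_or_lt
  · exact ⟨ht.le, by lia, ht.ne'⟩
  obtain rfl | hut := (Int.le_of_lt_add_one hut).eq_or_lt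
  · rw [D.mate_mate]
    exact ⟨le_rfl, by lia, ht.ne⟩
  · have hu := D.nested htu hut
    exact ⟨hu.1.le, by lia, hu.2.2⟩

theorem covers_mate {t : ℤ} (ht : D.mate t < t) : D.Covers (D.mate t) t := by
  refine ⟨ht, ?_, ?_⟩
  · simpa [Out, D.mate_mate] using ht.le
  · simpa [D.mate_mate] using D.closed_interior (D.mate t)

theorem Covers.unique {i j t : ℤ} (hi : D.Covers i t) (hj : D.Covers j t) : i = j := by
  wlog hij : i < j generalizing i j
  · obtain h | h := (not_lt.1 hij).eq_or_lt
    · exact h.symm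
    · exact (this hj hi h).symm
  have hclosed : D.Closed (i + 1) (j + 1) :=
    hi.2.2.left hj.2.2 (Int.add_one_le_of_lt hj.1)
  have hj' := hclosed j (by lia) (by lia)
  have := hj.2.1
  grind [Out]

theorem Covers.through {i t : ℤ} (h : D.Covers i t) (ht : D.Through t) : D.Through i := by
  obtain ⟨hit, hi, hc⟩ := h
  by_contra hne
  have hlt : i < D.mate i := lt_of_le_of_ne hi (Ne.symm hne)
  obtain hm | hm | hm := lt_trichotomy (D.mate i) t
  · have := hc (D.mate i) (by lia) hm
    rw [D.mate_mate] at this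
    lia
  · exact through_notMem_arc ht ⟨hit, hm.ge⟩
  · exact through_notMem_arc ht ⟨hit, hm.le⟩

theorem exists_covers {t₀ t : ℤ} (h₀ : D.Through t₀) (h : t₀ < t) :
    ∃ i, t₀ ≤ i ∧ D.Covers i t := by
  induction hk : (t - t₀).toNat using Nat.strong_induction_on generalizing t with
  | h k ih =>
    subst hk
    by_cases hout : D.Out (t - 1)
    · exact ⟨t - 1, by lia, by lia, hout, by simpa using Closed.nil t⟩
    set r := D.mate (t - 1) with hr
    have hmate : D.mate r = t - 1 := by rw [hr, D.mate_mate]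
    have hrt : r < t - 1 := not_out.1 hout
    have hr₀ : t₀ < r := by
      by_contra! hle
      obtain rfl | hlt := hle.eq_or_lt
      · exact hrt.ne (h₀.symm.trans hmate)
      · exact through_notMem_arc h₀ ⟨hlt, by lia⟩
    obtain ⟨i, hi₀, hir, hi, hc⟩ := ih _ (by lia) hr₀ rfl
    have harc : D.Closed r t := by simpa [hmate] using closed_arc (hrt.trans_eq hmate.symm)
    exact ⟨i, hi₀, by lia, hi, hc.append harc (by lia) (by lia)⟩

theorem mate_eq_of_out_iff {D D' : ArcDiagram n} (h : ∀ t, D.Out t ↔ D'.Out t) {t : ℤ}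
    (ht : t < D.mate t) : D'.mate t = D.mate t := by
  induction hk : (D.mate t - t).toNat using Nat.strong_induction_on generalizing D D' t with
  | h k ih =>
    subst hk
    set s := D.mate t with hs
    set r := D'.mate s
    have hsr : D'.mate r = s := D'.mate_mate s
    have hrs : r < s := by
      rw [← not_out, ← h, not_out, hs, D.mate_mate]
      exact ht
    obtain hrt | hrt | hrt := lt_trichotomy r t
    · have hnest := D'.nested (t := r) (u := t) hrt (hsr.symm ▸ ht)
      have hout : D'.Out t := (h t).1 ht.le
      have htu : t < D'.mate t := lt_of_le_of_ne hout hnest.2.2.symm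
      have := ih _ (by lia) (fun u => (h u).symm) htu rfl
      lia
    · rw [← hrt, hsr]
    · have hnest := D.nested hrt hrs
      have hout : D.Out r := (h r).2 (hrs.le.trans_eq hsr.symm)
      have := ih _ (by lia) h (lt_of_le_of_ne hout hnest.2.2.symm) rfl
      lia

theorem ext_out {D D' : ArcDiagram n} (h : ∀ t, D.Out t ↔ D'.Out t) : D = D' := by
  ext t
  obtain ht | ht | ht := lt_trichotomy t (D.mate t)
  · exact (mate_eq_of_out_iff h ht).symm
  · have ht' : t ≤ D'.mate t := (h t).1 ht.le
    obtain ht' | ht' := ht'.eq_or_lt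
    · rw [← ht, ← ht']
    · exact mate_eq_of_out_iff (fun u => (h u).symm) ht'
  · have hm := mate_eq_of_out_iff h (t := D.mate t) (by rwa [D.mate_mate])
    rw [D.mate_mate] at hm
    rw [← D'.mate_mate (D.mate t), hm]

theorem exists_of_rel (M : ℤ → ℤ → Prop) (existsUnique : ∀ t, ∃! u, M t u)
    (symm : ∀ t u, M t u → M u t) (add : ∀ t u, M t u → M (t + n) (u + n))
    (nested : ∀ t s u v, M t s → M u v → t < u → u < s → t < v ∧ v < s ∧ v ≠ u)
    (fixed : ∃ t, M t t) : ∃ D : ArcDiagram n, ∀ t u, D.mate t = u ↔ M t u := by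
  choose mate hmate hunique using existsUnique
  have mate_eq {t u : ℤ} (h : M t u) : mate t = u := (hunique t u h).symm
  exact ⟨{ mate
           mate_mate := fun t => mate_eq (symm _ _ (hmate t))
           mate_add := fun t => mate_eq (add _ _ (hmate t))
           nested := nested _ _ _ _ (hmate _) (hmate _)
           exists_fixed := fixed.imp fun _ => mate_eq },
    fun t u => ⟨fun h => h ▸ hmate t, mate_eq⟩⟩

end ArcDiagram

/-! ### Reading a word along an arc diagram -/

section Path

variable {n N : ℕ}

/-- The element of the free group spelled by the letters of `W` at the positions of `[a, b)`. -/
def path (W : ℤ → Letter N) (a b : ℤ) : FreeGroup (Fin N) :=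
  FreeGroup.mk ((Int.range a b).map W)

theorem path_mul_path (W : ℤ → Letter N) {a b c : ℤ} (hab : a ≤ b) (hbc : b ≤ c) :
    path W a b * path W b c = path W a c := by
  rw [path, path, path, FreeGroup.mul_mk, ← List.map_append, range_append hab hbc]

theorem path_self (W : ℤ → Letter N) (a : ℤ) : path W a a = 1 := by
  simp [path, range_eq_nil, FreeGroup.one_eq_mk]

theorem path_succ_self (W : ℤ → Letter N) (a : ℤ) : path W a (a + 1) = FreeGroup.mk [W a] := by
  simp [path, range_succ_self]

namespace ArcDiagram

variable {D D' : ArcDiagram n} {W : ℤ → Letter N}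

theorem Closed.red_nil (hW : ∀ t, ¬D.Through t → W t = linv (W (D.mate t))) {a b : ℤ}
    (h : D.Closed a b) : FreeGroup.Red ((Int.range a b).map W) [] := by
  induction hk : (b - a).toNat using Nat.strong_induction_on generalizing a b with
  | h k ih =>
    subst hk
    obtain hba | hab := le_or_gt b a
    · simpa [range_eq_nil hba] using FreeGroup.Red.refl
    obtain ⟨ham, hmb, hne⟩ := h a le_rfl hab
    set m := D.mate a
    have hlt : a < m := lt_of_le_of_ne ham hne.symm
    have hrest : D.Closed (m + 1) b := h.right (closed_arc hlt) (by lia)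
    have hinner := ih _ (by lia) (closed_interior a) rfl
    have houter := ih _ (by lia) hrest rfl
    have hWm : W m = linv (W a) := eq_linv_comm.1 (hW a hne)
    rw [range_eq_cons hab, ← range_append (show a + 1 ≤ m by lia) hmb.le, range_eq_cons hmb,
      List.map_cons, List.map_append, List.map_cons, hWm]
    exact ((hinner.append_append (.refl)).cons_cons).trans ((red_cons_linv _ _).trans houter)

theorem Closed.path_eq_one (hW : ∀ t, ¬D.Through t → W t = linv (W (D.mate t))) {a b : ℤ}
    (h : D.Closed a b) : path W a b = 1 := by
  rw [path, FreeGroup.one_eq_mk]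
  exact FreeGroup.Red.exact.2 ⟨[], h.red_nil hW, .refl⟩

/-- A letter is inverse to the letter covering it exactly when it closes an arc. On a lift of a
half-pairing this is admissibility, with the conditions at the through strings included. -/
def Compatible (D : ArcDiagram n) (W : ℤ → Letter N) : Prop :=
  ∀ i t, D.Covers i t → (W t = linv (W i) ↔ ¬D.Out t)

theorem Compatible.eq_linv_mate (hD : D.Compatible W) {t : ℤ} (ht : ¬D.Through t) :
    W t = linv (W (D.mate t)) := by
  obtain hlt | hlt := lt_or_gt_of_ne (ht : D.mate t ≠ t)
  · exact (hD _ _ (covers_mate hlt)).2 (not_out.2 hlt)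
  · have hcov := covers_mate (D := D) (t := D.mate t) (by rwa [D.mate_mate])
    rw [D.mate_mate] at hcov
    exact eq_linv_comm.1 ((hD _ _ hcov).2 (not_out.2 (by rwa [D.mate_mate])))

theorem Compatible.toWord_path (hD : D.Compatible W) {t₀ i t : ℤ} (h₀ : D.Through t₀)
    (hi : t₀ ≤ i) (hit : D.Covers i t) :
    (path W t₀ t).toWord = (path W t₀ i).toWord ++ [W i] := by
  induction hk : (i - t₀).toNat using Nat.strong_induction_on generalizing i t with
  | h k ih =>
    subst hk
    have hpath : path W t₀ t = path W t₀ i * FreeGroup.mk [W i] := by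
      rw [← path_mul_path W hi hit.1.le, ← path_mul_path W (by lia) (Int.add_one_le_of_lt hit.1),
        path_succ_self, hit.2.2.path_eq_one fun _ => hD.eq_linv_mate, mul_one]
    have hreduced : FreeGroup.IsReduced ((path W t₀ i).toWord ++ [W i]) := by
      obtain rfl | hlt := hi.eq_or_lt
      · simp [path_self]
      obtain ⟨j, hj, hji⟩ := exists_covers h₀ hlt
      have hword := ih _ (by have := hji.1; lia) hj hji rfl
      rw [hword]
      exact isReduced_concat_concat (hword ▸ FreeGroup.isReduced_toWord)
        (mt (hD _ _ hji).1 (not_not.2 hit.2.1))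
    rw [hpath, FreeGroup.toWord_mul, FreeGroup.toWord_mk, FreeGroup.reduce_singleton,
      hreduced.reduce_eq]

theorem Compatible.out_iff (hD : D.Compatible W) {t₀ t : ℤ} (h₀ : D.Through t₀) (ht : t₀ < t) :
    D.Out t ↔ (path W t₀ t).toWord.getLast? ≠ some (linv (W t)) := by
  obtain ⟨i, hi, hit⟩ := exists_covers h₀ ht
  rw [hD.toWord_path h₀ hi hit, List.getLast?_concat, ne_eq, Option.some_inj, ← eq_linv_comm,
    hD i t hit, not_not]

theorem Compatible.le_norm_path [NeZero n] (hD : D.Compatible W) {t₀ : ℤ} (h₀ : D.Through t₀)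
    (q : ℕ) {t : ℤ} (ht : t₀ + q * n ≤ t) : q ≤ (path W t₀ t).norm := by
  induction q generalizing t with
  | zero => exact Nat.zero_le _
  | succ q ih =>
    have hn : (0 : ℤ) < n := by exact_mod_cast NeZero.pos n
    push_cast [add_one_mul] at ht
    have hq : D.Through (t₀ + q * n) := through_add_mul.2 h₀
    obtain ⟨i, hi, hit⟩ := exists_covers hq (show t₀ + q * n < t by lia)
    rw [FreeGroup.norm, hD.toWord_path h₀ (by nlinarith) hit, List.length_append]
    exact Nat.succ_le_succ (ih hi)

theorem Compatible.out_iff_out [NeZero n] (hD : D.Compatible W) (hD' : D'.Compatible W)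
    (t : ℤ) : D.Out t ↔ D'.Out t := by
  obtain ⟨t₀, h₀⟩ := D.exists_fixed
  obtain ⟨t₁, h₀₁, -, h₁⟩ := D'.exists_through_add t₀
  set h := path W t₀ t₁
  have hn : (1 : ℤ) ≤ n := by exact_mod_cast NeZero.pos n
  obtain ⟨q, hq⟩ : ∃ q : ℕ, t₁ + (h.norm + 1 : ℕ) * n ≤ t + q * n :=
    ⟨h.norm + 1 + (t₁ - t).toNat, by push_cast; nlinarith [Int.self_le_toNat (t₁ - t)]⟩
  set t' := t + q * n with ht'
  have ht₁ : t₁ < t' := by push_cast at hq; nlinarith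
  have hlast : (path W t₀ t').toWord.getLast? = (path W t₁ t').toWord.getLast? := by
    rw [← path_mul_path W h₀₁ ht₁.le]
    exact getLast?_toWord_mul (hD'.le_norm_path h₁ _ hq)
  rw [← out_add_mul (q := q), ← out_add_mul (D := D') (q := q), ← ht',
    hD.out_iff h₀ (h₀₁.trans_lt ht₁), hD'.out_iff h₁ ht₁, hlast]

/-- Only one diagram is compatible with a periodic word: far to the right of a through string of
either diagram, the last letter of the reduced word of the past no longer depends on where reading
started. -/
theorem Compatible.unique [NeZero n] (hD : D.Compatible W) (hD' : D'.Compatible W) :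
    D = D' :=
  ext_out (hD.out_iff_out hD')

end ArcDiagram

end Path

namespace ArcDiagram

section CyclicReduction

variable {n N : ℕ} {D : ArcDiagram n} {W : ℤ → Letter N}

variable (D) in
/-- The through strings in `[a, b)`, in increasing order. -/
noncomputable def throughs (a b : ℤ) : List ℤ :=
  (Int.range a b).filter D.Through

theorem throughs_append {a b c : ℤ} (hab : a ≤ b) (hbc : b ≤ c) :
    D.throughs a b ++ D.throughs b c = D.throughs a c := by
  rw [throughs, throughs, throughs, ← List.filter_append, range_append hab hbc]

theorem Closed.throughs_eq_nil {a b : ℤ} (h : D.Closed a b) : D.throughs a b = [] := by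
  refine List.filter_eq_nil_iff.2 fun t ht => ?_
  obtain ⟨hat, htb⟩ := Int.mem_range_iff.1 ht
  simp [show ¬D.Through t from (h t hat htb).2.2]

theorem Through.throughs_succ {t : ℤ} (h : D.Through t) : D.throughs t (t + 1) = [t] := by
  simp [throughs, range_succ_self, h]

theorem throughs_succ_eq_nil {t : ℤ} (h : ¬D.Through t) : D.throughs t (t + 1) = [] := by
  simp [throughs, range_succ_self, h]

theorem red_throughs (hW : ∀ t, ¬D.Through t → W t = linv (W (D.mate t))) {a b : ℤ}
    (h : ∀ t, a ≤ t → t < b → a ≤ D.mate t ∧ D.mate t < b) :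
    FreeGroup.Red ((Int.range a b).map W) ((D.throughs a b).map W) := by
  induction hk : (b - a).toNat using Nat.strong_induction_on generalizing a with
  | h k ih =>
    subst hk
    obtain hba | hab := le_or_gt b a
    · simpa [throughs, range_eq_nil hba] using FreeGroup.Red.refl
    obtain ⟨ham, hmb⟩ := h a le_rfl hab
    have split : FreeGroup.Red ((Int.range a (D.mate a + 1)).map W)
        ((D.throughs a (D.mate a + 1)).map W) := by
      obtain hthrough | hlt := ham.eq_or_lt
      · rw [← hthrough, range_succ_self, Through.throughs_succ hthrough.symm]
      · rw [(closed_arc hlt).throughs_eq_nil]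
        exact (closed_arc hlt).red_nil hW
    have stable : ∀ t, D.mate a + 1 ≤ t → t < b → D.mate a + 1 ≤ D.mate t ∧ D.mate t < b := by
      intro t hat htb
      have ht := h t (by lia) htb
      refine ⟨?_, ht.2⟩
      by_contra! hlt
      obtain hthrough | hlt' := ham.eq_or_lt
      · rw [← hthrough] at hat hlt
        have : D.mate t = a := by lia
        rw [← D.mate_mate t, this] at hat
        lia
      · have := closed_arc hlt' (D.mate t) ht.1 hlt
        rw [D.mate_mate] at this
        lia
    rw [← range_append (show a ≤ D.mate a + 1 by lia) hmb,
      ← throughs_append (show a ≤ D.mate a + 1 by lia) hmb, List.map_append, List.map_append]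
    exact split.append_append (ih _ (by lia) stable rfl)

theorem Closed.mate_mem_of_through {a b : ℤ} (hc : D.Closed b (a + n)) (ha : D.Through a)
    (hba : b ≤ a + n) {t : ℤ} (hat : a ≤ t) (htb : t < b) : a ≤ D.mate t ∧ D.mate t < b := by
  have ha' : D.Through (a + n) := by simpa using (through_add_mul (q := 1)).2 ha
  constructor <;> by_contra! hlt
  · exact through_notMem_arc ha ⟨hlt, by rwa [D.mate_mate]⟩
  · obtain hlt' | hle := lt_or_ge (D.mate t) (a + n)
    · have := hc _ hlt hlt'
      rw [D.mate_mate] at this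
      lia
    · exact through_notMem_arc ha' ⟨htb.trans_le hba, hle⟩

theorem Closed.mate_lt_right [NeZero n] {a b : ℤ} (hc : D.Closed b (a + n)) (hab : a < b) :
    D.mate a < b := by
  by_contra! hbm
  have := hc _ hbm (mate_lt a)
  rw [D.mate_mate] at this
  lia

theorem Closed.of_mate_lt {a b : ℤ} (hc : D.Closed b (a + n)) (ha : D.mate a < a)
    (hba : b ≤ a + n) :
    D.mate a + n < b ∧ D.Closed (D.mate a + n) (a + 1 + n) ∧ D.Closed (D.mate a + n + 1) b := by
  have hmate : D.mate (D.mate a + n) = a + n := by rw [D.mate_add, D.mate_mate]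
  refine ⟨?_, ?_, ?_⟩
  · by_contra! hbm
    have := hc _ hbm (by lia)
    lia
  · have harc := closed_arc (D := D) (t := D.mate a + n) (by lia)
    rwa [hmate, add_right_comm] at harc
  · have hinner := closed_interior (D := D) (D.mate a + n)
    rw [hmate] at hinner
    exact hinner.left hc hba

theorem cycReducesTo_interior (hW : ∀ t, ¬D.Through t → W t = linv (W (D.mate t))) {a c b : ℤ}
    (hac : a < c) (hcb : c < b) (hWc : W c = linv (W a)) (hc : D.Closed (c + 1) b) :
    CycReducesTo ((Int.range a b).map W) ((Int.range (a + 1) c).map W) := by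
  have hred : FreeGroup.Red ((Int.range a b).map W)
      (W a :: ((Int.range (a + 1) c).map W ++ [linv (W a)])) := by
    rw [range_eq_cons (hac.trans hcb), ← range_append (Int.add_one_le_of_lt hac) hcb.le,
      range_eq_cons hcb, List.map_cons, List.map_append, List.map_cons, hWc]
    exact (FreeGroup.Red.append_append .refl (hc.red_nil hW).cons_cons).cons_cons
  exact (CycReducesTo.of_red hred).trans (CycReducesTo.cons_concat_linv _ _)

theorem cycReducesTo_throughs [NeZero n] (hW : ∀ t, ¬D.Through t → W t = linv (W (D.mate t)))
    (hper : Function.Periodic W n) {a b : ℤ} (hab : a ≤ b) (hba : b ≤ a + n)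
    (hc : D.Closed b (a + n)) :
    CycReducesTo ((Int.range a b).map W) ((D.throughs a b).map W) := by
  induction hk : (b - a).toNat using Nat.strong_induction_on generalizing a b with
  | h k ih =>
    subst hk
    obtain rfl | hab := hab.eq_or_lt
    · simpa [throughs, range_eq_nil] using CycReducesTo.of_red .refl
    obtain hlt | ha | hlt := lt_trichotomy (D.mate a) a
    · have hac : a < D.mate a + n := lt_mate a
      obtain ⟨hcb, harc, hrest⟩ := hc.of_mate_lt hlt hba
      have hWc : W (D.mate a + n) = linv (W a) := by rw [hper, hW a hlt.ne, linv_linv]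
      have hnot : ¬D.Through (D.mate a + n) := (harc _ le_rfl (by lia)).2.2
      have hthroughs : D.throughs a b = D.throughs (a + 1) (D.mate a + n) := by
        rw [← throughs_append (show a ≤ a + 1 by lia) (by lia), throughs_succ_eq_nil hlt.ne,
          ← throughs_append (Int.add_one_le_of_lt hac) hcb.le,
          ← throughs_append (show D.mate a + n ≤ D.mate a + n + 1 by lia) hcb,
          throughs_succ_eq_nil hnot, hrest.throughs_eq_nil]
        simp
      rw [hthroughs]
      exact (cycReducesTo_interior hW hac hcb hWc hrest).trans
        (ih _ (by lia) (Int.add_one_le_of_lt hac) (by lia) harc rfl)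
    · exact .of_red (red_throughs hW fun t => hc.mate_mem_of_through ha hba)
    · have hmb : D.mate a < b := hc.mate_lt_right hab
      have harc := closed_arc hlt
      have hrest : D.Closed b (D.mate a + 1 + n) := by
        simpa [add_right_comm] using hc.append harc.add hba (by lia)
      rw [← range_append (show a ≤ D.mate a + 1 by lia) hmb,
        ← throughs_append (show a ≤ D.mate a + 1 by lia) hmb, harc.throughs_eq_nil,
        List.nil_append, List.map_append]
      exact (CycReducesTo.of_red ((harc.red_nil hW).append_append .refl)).trans
        (ih _ (by lia) hmb (by lia) hrest rfl)

theorem Covers.pair_infix_throughs {i t a b : ℤ} (h : D.Covers i t) (hi : D.Through i)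
    (ht : D.Through t) (hai : a ≤ i) (htb : t < b) : [i, t] <:+: D.throughs a b := by
  refine ⟨D.throughs a i, D.throughs (t + 1) b, ?_⟩
  rw [← throughs_append hai (h.1.trans htb).le, ← throughs_append h.1.le htb.le,
    ← throughs_append (show i ≤ i + 1 by lia) (Int.add_one_le_of_lt h.1),
    ← throughs_append (show t ≤ t + 1 by lia) (Int.add_one_le_of_lt htb),
    hi.throughs_succ, ht.throughs_succ, h.2.2.throughs_eq_nil]
  simp

theorem throughs_add (a b : ℤ) :
    D.throughs (a + n) (b + n) = (D.throughs a b).map (· + (n : ℤ)) := by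
  have hcomp : (fun t => decide (D.Through t)) ∘ (· + (n : ℤ)) = fun t => decide (D.Through t) := by
    ext t
    simpa using through_add_mul (D := D) (t := t) (q := 1)
  rw [throughs, throughs, range_add, List.filter_map, hcomp]

theorem map_throughs_append_self (hper : Function.Periodic W n) :
    (D.throughs 0 n).map W ++ (D.throughs 0 n).map W = (D.throughs 0 (n + n)).map W := by
  have hshift := D.throughs_add 0 n
  rw [zero_add] at hshift
  rw [← throughs_append (show (0 : ℤ) ≤ n by lia) (show (n : ℤ) ≤ n + n by lia), List.map_append,
    hshift, List.map_map]
  congr 2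
  exact (funext hper).symm

theorem ne_linv_of_covers [NeZero n] (hper : Function.Periodic W n)
    (hv : CycReduced ((D.throughs 0 n).map W)) {i t : ℤ} (h : D.Covers i t) (ht : D.Through t) :
    W t ≠ linv (W i) := by
  have hn : (0 : ℤ) < n := by exact_mod_cast NeZero.pos n
  have hi := h.through ht
  have hle : t ≤ i + n := by
    by_contra! hlt
    exact (h.2.2 (i + n) (by lia) hlt).2.2 (by simpa [Through, D.mate_add] using hi)
  have hW (s : ℤ) : W (s + -(i / n) * n) = W s := hper.int_mul _ _
  have hmod := Int.emod_add_ediv_mul i n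
  have hinfix := (h.add_mul (-(i / n))).pair_infix_throughs (a := 0) (b := n + n)
    (through_add_mul.2 hi) (through_add_mul.2 ht)
    (by have := Int.emod_nonneg i hn.ne'; linarith) (by have := Int.emod_lt_of_pos i hn; linarith)
  have hpair := hinfix.map W
  rw [List.map_cons, List.map_singleton, hW, hW, ← map_throughs_append_self hper] at hpair
  exact hv.ne_linv_of_infix hpair

end CyclicReduction

end ArcDiagram

/-! ### The arc diagram of a drifting walk -/

section Walk

/-- The walk `h` steps up at `r` and comes back to the height `h r` for the first time with its
step at `s`. -/
def Excursion (h : ℤ → ℤ) (r s : ℤ) : Prop :=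
  r < s ∧ h (s + 1) = h r ∧ ∀ x, r < x → x ≤ s → h r < h x

/-- The walk `h` stays above the height `h t` after time `t`. -/
def Escapes (h : ℤ → ℤ) (t : ℤ) : Prop :=
  ∀ x, t < x → h t < h x

/-- The two steps bounding an excursion are matched with each other, and an escaping step with
itself. -/
def Matches (h : ℤ → ℤ) (t u : ℤ) : Prop :=
  (t = u ∧ Escapes h t) ∨ Excursion h t u ∨ Excursion h u t

variable {h : ℤ → ℤ}

theorem Matches.symm {t u : ℤ} : Matches h t u → Matches h u t := by
  rintro (⟨rfl, ht⟩ | ht | ht)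
  exacts [.inl ⟨rfl, ht⟩, .inr (.inr ht), .inr (.inl ht)]

theorem Escapes.up {t : ℤ} (ht : Escapes h t) : h t < h (t + 1) :=
  ht _ (by lia)

theorem Excursion.up {r s : ℤ} (hrs : Excursion h r s) : h r < h (r + 1) :=
  hrs.2.2 _ (by lia) (Int.add_one_le_of_lt hrs.1)

theorem Excursion.down {r s : ℤ} (hrs : Excursion h r s) : h (s + 1) < h s :=
  hrs.2.1.trans_lt (hrs.2.2 s hrs.1 le_rfl)

theorem Matches.up_iff {t u : ℤ} (htu : Matches h t u) : h t < h (t + 1) ↔ t ≤ u := by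
  obtain ⟨rfl, ht⟩ | ht | ht := htu
  · exact iff_of_true ht.up le_rfl
  · exact iff_of_true ht.up ht.1.le
  · exact iff_of_false ht.down.not_gt ht.1.not_ge

theorem Excursion.right_le {r s s' : ℤ} (hs : Excursion h r s) (hs' : Excursion h r s') :
    s' ≤ s := by
  by_contra! hlt
  exact (hs'.2.2 (s + 1) (by have := hs.1; lia) hlt).ne' hs.2.1

theorem Excursion.left_le {r r' s : ℤ} (hr : Excursion h r s) (hr' : Excursion h r' s) :
    r' ≤ r := by
  by_contra! hlt
  exact (hr.2.2 r' hlt hr'.1.le).ne (hr.2.1.symm.trans hr'.2.1)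

theorem Escapes.not_excursion {t s : ℤ} (ht : Escapes h t) : ¬Excursion h t s :=
  fun hs => (ht (s + 1) (by have := hs.1; lia)).ne' hs.2.1

theorem Matches.unique {t u u' : ℤ} (hu : Matches h t u) (hu' : Matches h t u') : u = u' := by
  have hle := hu.up_iff.symm.trans hu'.up_iff
  obtain ⟨rfl, ht⟩ | hu | hu := hu <;> obtain ⟨rfl, ht'⟩ | hu' | hu' := hu'
  · rfl
  · exact absurd hu' ht.not_excursion
  · exact absurd hu'.1 (hle.1 le_rfl).not_gt
  · exact absurd hu ht'.not_excursion
  · exact le_antisymm (hu'.right_le hu) (hu.right_le hu')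
  · exact absurd hu'.1 (hle.1 hu.1.le).not_gt
  · exact absurd hu.1 (hle.2 le_rfl).not_gt
  · exact absurd hu.1 (hle.2 hu'.1.le).not_gt
  · exact le_antisymm (hu'.left_le hu) (hu.left_le hu')

theorem Excursion.mem_of_matches {t s u v : ℤ} (hts : Excursion h t s) (huv : Matches h u v)
    (htu : t < u) (hus : u < s) : t < v ∧ v < s ∧ v ≠ u := by
  have hu : h t < h u := hts.2.2 u htu hus.le
  obtain ⟨rfl, hesc⟩ | huv | hvu := huv
  · exact absurd (hesc (s + 1) (by lia)) (by rw [hts.2.1]; exact hu.not_gt)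
  · refine ⟨htu.trans huv.1, ?_, huv.1.ne'⟩
    by_contra! hsv
    obtain rfl | hlt := hsv.eq_or_lt
    · exact hu.ne (hts.2.1.symm.trans huv.2.1)
    · have := huv.2.2 (s + 1) (by lia) hlt
      rw [hts.2.1] at this
      exact this.not_gt hu
  · refine ⟨?_, hvu.1.trans hus, hvu.1.ne⟩
    have hlt : h t < h v := hvu.2.1 ▸ hts.2.2 (u + 1) (by lia) hus
    by_contra! hvt
    obtain rfl | hvt := hvt.eq_or_lt
    · exact hlt.false
    · exact (hvu.2.2 t hvt htu.le).not_gt hlt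

section Drift

variable {n : ℕ} {d : ℤ}

theorem walk_add_mul (hadd : ∀ t, h (t + n) = h t + d) (t q : ℤ) : h (t + q * n) = h t + q * d := by
  induction q with
  | zero => simp
  | succ k ih => rw [add_one_mul, ← add_assoc, hadd, ih]; ring
  | pred k ih =>
    have := hadd (t + (-k - 1) * n)
    rw [show t + (-k - 1 : ℤ) * n + n = t + -k * n by ring, ih] at this
    linarith

theorem exists_escapes [NeZero n] (hadd : ∀ t, h (t + n) = h t + d) (hd : 0 < d) :
    ∃ t, Escapes h t := by
  have hn : (0 : ℤ) < n := by exact_mod_cast NeZero.pos n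
  -- the last minimum of `h` on `[0, n)`
  obtain ⟨t, ht, hmin⟩ := (Finset.Ico (0 : ℤ) n).exists_min_image (fun t => n * h t - t)
    ⟨0, by simpa using hn⟩
  rw [Finset.mem_Ico] at ht
  refine ⟨t, fun x htx => ?_⟩
  have hy := hmin (x % n) (Finset.mem_Ico.2 ⟨Int.emod_nonneg x hn.ne', Int.emod_lt_of_pos x hn⟩)
  have hx := walk_add_mul hadd (x % n) (x / n)
  rw [Int.emod_add_ediv_mul] at hx
  have hq : 0 ≤ x / n := Int.ediv_nonneg (by lia) hn.le
  have hmod := Int.emod_add_ediv_mul x n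
  have := Int.emod_nonneg x hn.ne'
  obtain hq | hq := hq.eq_or_lt
  · simp only [← hq, zero_mul, add_zero] at hx hmod
    nlinarith
  · have : h t ≤ h (x % n) := by
      by_contra! hlt
      nlinarith
    nlinarith

theorem escapes_or_exists_excursion (hstep : ∀ t, h (t + 1) = h t + 1 ∨ h (t + 1) = h t - 1)
    {t : ℤ} (ht : h t < h (t + 1)) : Escapes h t ∨ ∃ s, Excursion h t s := by
  refine or_iff_not_imp_left.2 fun hesc => ?_
  simp only [Escapes, not_forall, not_lt] at hesc
  obtain ⟨x, htx, hx⟩ := hesc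
  obtain ⟨y, ⟨hty, hy⟩, hleast⟩ := Int.exists_least_of_bdd
    (P := fun y => t < y ∧ h y ≤ h t) ⟨t, fun y hy => hy.1.le⟩ ⟨x, htx, hx⟩
  have habove : ∀ x, t < x → x < y → h t < h x := fun x htx hxy => by
    by_contra! hle
    exact (hleast x ⟨htx, hle⟩).not_gt hxy
  have hty' : t < y - 1 := by
    by_contra! hle
    obtain rfl : y = t + 1 := by lia
    exact hy.not_gt ht
  have hprev := habove (y - 1) hty' (by lia)
  have hlast := hstep (y - 1)
  refine ⟨y - 1, hty', ?_, fun x htx hxy => habove x htx (by lia)⟩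
  rw [sub_add_cancel] at hlast ⊢
  lia

theorem exists_excursion_of_down [NeZero n]
    (hstep : ∀ t, h (t + 1) = h t + 1 ∨ h (t + 1) = h t - 1)
    (hadd : ∀ t, h (t + n) = h t + d) (hd : 0 < d) {t : ℤ} (ht : h (t + 1) < h t) :
    ∃ r, Excursion h r t := by
  have hn : (0 : ℤ) < n := by exact_mod_cast NeZero.pos n
  have hlow := hadd (t + 1 - n)
  rw [sub_add_cancel] at hlow
  obtain ⟨r, ⟨hrt, hr⟩, hgreatest⟩ := Int.exists_greatest_of_bdd
    (P := fun r => r ≤ t ∧ h r ≤ h (t + 1)) ⟨t, fun r hr => hr.1⟩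
    ⟨t + 1 - n, by lia, by lia⟩
  have habove : ∀ x, r < x → x ≤ t → h (t + 1) < h x := fun x hrx hxt => by
    by_contra! hle
    exact (hgreatest x ⟨hxt, hle⟩).not_gt hrx
  have hrt' : r < t := by
    by_contra! hle
    obtain rfl : r = t := by lia
    exact hr.not_gt ht
  have hnext := habove (r + 1) (by lia) (by lia)
  have hfirst := hstep r
  have heq : h (t + 1) = h r := by lia
  exact ⟨r, hrt', heq, fun x hrx hxt => heq ▸ habove x hrx hxt⟩

theorem Excursion.add (hadd : ∀ t, h (t + n) = h t + d) {r s : ℤ} (hrs : Excursion h r s) :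
    Excursion h (r + n) (s + n) := by
  refine ⟨by have := hrs.1; lia, by rw [add_right_comm, hadd, hadd, hrs.2.1], fun x hrx hxs => ?_⟩
  have hx := hrs.2.2 (x - n) (by lia) (by lia)
  have hxn := hadd (x - n)
  rw [sub_add_cancel] at hxn
  rw [hadd, hxn]
  lia

theorem Matches.add (hadd : ∀ t, h (t + n) = h t + d) {t u : ℤ} :
    Matches h t u → Matches h (t + n) (u + n) := by
  rintro (⟨rfl, ht⟩ | ht | ht)
  · refine .inl ⟨rfl, fun x htx => ?_⟩
    have hx := ht (x - n) (by lia)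
    have hxn := hadd (x - n)
    rw [sub_add_cancel] at hxn
    rw [hadd, hxn]
    lia
  · exact .inr (.inl (ht.add hadd))
  · exact .inr (.inr (ht.add hadd))

theorem exists_matches [NeZero n] (hstep : ∀ t, h (t + 1) = h t + 1 ∨ h (t + 1) = h t - 1)
    (hadd : ∀ t, h (t + n) = h t + d) (hd : 0 < d) (t : ℤ) : ∃ u, Matches h t u := by
  obtain hlt | hlt := lt_or_gt_of_ne (show h t ≠ h (t + 1) by have := hstep t; lia)
  · obtain hesc | ⟨s, hs⟩ := escapes_or_exists_excursion hstep hlt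
    · exact ⟨t, .inl ⟨rfl, hesc⟩⟩
    · exact ⟨s, .inr (.inl hs)⟩
  · obtain ⟨r, hr⟩ := exists_excursion_of_down hstep hadd hd hlt
    exact ⟨r, .inr (.inr hr)⟩

theorem exists_arcDiagram_of_walk [NeZero n]
    (hstep : ∀ t, h (t + 1) = h t + 1 ∨ h (t + 1) = h t - 1)
    (hadd : ∀ t, h (t + n) = h t + d) (hd : 0 < d) :
    ∃ D : ArcDiagram n, ∀ t, D.Out t ↔ h t < h (t + 1) := by
  have nested (t s u v : ℤ) (hts : Matches h t s) (huv : Matches h u v) (htu : t < u)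
      (hus : u < s) : t < v ∧ v < s ∧ v ≠ u := by
    obtain ⟨rfl, -⟩ | hts | hts := hts
    · exact absurd htu hus.not_gt
    · exact hts.mem_of_matches huv htu hus
    · exact absurd hts.1 (htu.trans hus).not_gt
  obtain ⟨D, hD⟩ := ArcDiagram.exists_of_rel (n := n) (Matches h)
    (fun t => (exists_matches hstep hadd hd t).imp fun u hu => ⟨hu, fun u' hu' => hu'.unique hu⟩)
    (fun _ _ => .symm) (fun _ _ => .add hadd) nested
    ((exists_escapes hadd hd).imp fun t ht => .inl ⟨rfl, ht⟩)
  exact ⟨D, fun t => ((hD t _).1 rfl).up_iff.symm⟩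

theorem exists_walk {A : Type*} [AddCommGroup A] (f : ℤ → A) :
    ∃ h : ℤ → A, ∀ t, h (t + 1) = h t + f t := by
  refine ⟨fun t => ∑ i ∈ Finset.Ico 0 t, f i - ∑ i ∈ Finset.Ico t 0, f i, fun t => ?_⟩
  obtain ht | ht := le_or_gt 0 t
  · simp only [Finset.Ico_eq_empty_of_le ht, Finset.Ico_eq_empty_of_le (show 0 ≤ t + 1 by lia),
      ← Finset.insert_Ico_right_eq_Ico_add_one ht]
    simp [add_comm]
  · simp only [Finset.Ico_eq_empty_of_le ht.le, Finset.Ico_eq_empty_of_le (Int.add_one_le_of_lt ht),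
      ← Finset.insert_Ico_add_one_left_eq_Ico ht]
    simp [add_comm]

theorem exists_arcDiagram_out_iff [NeZero n] {f : ℤ → ℤ} (hf : ∀ t, f t = 1 ∨ f t = -1)
    (hper : Function.Periodic f n) (hsum : 0 < ∑ j : Fin n, f (j : ℕ)) :
    ∃ D : ArcDiagram n, ∀ t, D.Out t ↔ f t = 1 := by
  obtain ⟨h, hh⟩ := exists_walk f
  have hdrift : h n - h 0 = ∑ j : Fin n, f (j : ℕ) := by
    rw [← Finset.sum_range (fun j => f (j : ℕ)), ← Nat.cast_zero (R := ℤ),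
      ← Finset.sum_range_sub (fun j : ℕ => h j)]
    exact Finset.sum_congr rfl fun j _ => by simp [hh]
  have hadd (t : ℤ) : h (t + n) = h t + (h n - h 0) := by
    induction t with
    | zero => simp
    | succ k ih => rw [add_right_comm, hh, hh, hper, ih]; ring
    | pred k ih =>
      have hk := hh (-k - 1)
      have hkn := hh (-k - 1 + n)
      rw [hper, add_right_comm, sub_add_cancel] at hkn
      rw [sub_add_cancel] at hk
      lia
  obtain ⟨D, hD⟩ := exists_arcDiagram_of_walk (n := n) (fun t => by have := hh t; grind) hadd
    (hdrift ▸ hsum)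
  refine ⟨D, fun t => ?_⟩
  rw [hD, hh]
  have := hf t
  lia

end Drift

end Walk

/-! ### The covering of the cycle by the integers -/

section Proj

variable {n : ℕ} [NeZero n]

variable (n) in
/-- The projection of `ℤ` onto the cycle `[n]`. -/
def proj (t : ℤ) : Fin n :=
  ⟨t.natMod n, Int.natMod_lt (NeZero.ne n)⟩

theorem val_proj (t : ℤ) : ((proj n t).val : ℤ) = t % n :=
  Int.toNat_of_nonneg (Int.emod_nonneg t (by exact_mod_cast NeZero.ne n))

theorem val_proj_of_lt {t : ℤ} (h0 : 0 ≤ t) (h1 : t < n) : ((proj n t).val : ℤ) = t := by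
  rw [val_proj, Int.emod_eq_of_lt h0 h1]

theorem proj_eq_proj_iff {a b : ℤ} : proj n a = proj n b ↔ a % n = b % n := by
  rw [Fin.ext_iff, ← Nat.cast_inj (R := ℤ), val_proj, val_proj]

theorem proj_val (x : Fin n) : proj n x.val = x :=
  Fin.ext (by exact_mod_cast val_proj_of_lt (n := n) (t := x.val) (by lia) (by exact_mod_cast x.2))

theorem proj_add_mul (t q : ℤ) : proj n (t + q * n) = proj n t :=
  proj_eq_proj_iff.2 (Int.add_mul_emod_self_right t q n)

theorem proj_periodic : Function.Periodic (proj n) n := fun t => by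
  simpa using proj_add_mul (n := n) t 1

theorem exists_eq_add_mul {a b : ℤ} (h : proj n a = proj n b) : ∃ q : ℤ, a = b + q * n := by
  rw [proj_eq_proj_iff] at h
  obtain ⟨q, hq⟩ := Int.dvd_of_emod_eq_zero (Int.emod_eq_emod_iff_emod_sub_eq_zero.1 h)
  exact ⟨q, by linarith⟩

theorem exists_proj_eq (a : ℤ) (x : Fin n) : ∃ t, a ≤ t ∧ t < a + n ∧ proj n t = x := by
  have hn : (0 : ℤ) < n := by exact_mod_cast NeZero.pos n
  have h0 := Int.emod_nonneg (x.val - a) hn.ne'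
  have h1 := Int.emod_lt_of_pos (x.val - a) hn
  refine ⟨a + (x.val - a) % n, by lia, by lia, ?_⟩
  rw [← proj_val x, proj_eq_proj_iff, Int.add_emod_emod, proj_val]
  congr 1
  ring

theorem eq_of_proj_eq {s t : ℤ} (h : proj n s = proj n t) (hst : |s - t| < n) : s = t := by
  rw [proj_eq_proj_iff] at h
  exact sub_eq_zero.1 (Int.eq_zero_of_abs_lt_dvd
    (Int.dvd_of_emod_eq_zero (Int.emod_eq_emod_iff_emod_sub_eq_zero.1 h)) hst)

theorem val_proj_add_sub_mod {a x : ℤ} (h : a ≤ x) (h' : x < a + n) :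
    ((((proj n x).val + n - (proj n a).val) % n : ℕ) : ℤ) = x - a := by
  have hsub : (x % n + n - a % n) % (n : ℤ) = (x - a) % n := by
    rw [Int.sub_emod, Int.add_emod_right, Int.emod_emod, Int.emod_emod, ← Int.sub_emod]
  have ha := (proj n a).2
  push_cast [Nat.cast_sub (show (proj n a).val ≤ (proj n x).val + n by lia)]
  rw [val_proj, val_proj, hsub, Int.emod_eq_of_lt (by lia) (by lia)]

theorem inCyc_proj_iff {a b x : ℤ} (hb : a ≤ b) (hb' : b < a + n) (hx : a ≤ x) (hx' : x < a + n) :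
    InCyc (proj n a) (proj n b) (proj n x) ↔ x ≤ b := by
  rw [InCyc, ← Nat.cast_le (α := ℤ), val_proj_add_sub_mod hx hx', val_proj_add_sub_mod hb hb']
  lia

theorem forall_inCyc_iff {a b : ℤ} (hb : a ≤ b) (hb' : b < a + n) {p : Fin n → Prop} :
    (∀ x, InCyc (proj n a) (proj n b) x → p x) ↔ ∀ t, a ≤ t → t ≤ b → p (proj n t) := by
  constructor
  · intro h t hat htb
    exact h _ ((inCyc_proj_iff hb hb' hat (by lia)).2 htb)
  · intro h x hx
    obtain ⟨t, hat, hta, rfl⟩ := exists_proj_eq a x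
    exact h t hat ((inCyc_proj_iff hb hb' hat hta).1 hx)

theorem cnext_proj (t : ℤ) : cnext (proj n t) = proj n (t + 1) := by
  apply Fin.ext
  zify [cnext]
  rw [val_proj, val_proj, Int.emod_add_emod]

theorem cprev_proj (t : ℤ) : cprev (proj n t) = proj n (t - 1) := by
  apply Fin.ext
  zify [cprev, show 1 ≤ (proj n t).val + n by have := NeZero.pos n; lia]
  rw [val_proj, val_proj, add_sub_right_comm, Int.add_emod_right, Int.emod_sub_emod]

end Proj

section NonCrossing

variable {n : ℕ} {R : Fin n → Fin n → Prop}

/-- The points of any window of length `n` may be read in place of `0, …, n - 1`: rotating by one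
step moves a point from the front to the back. -/
theorem NonCrossingRel.of_window [NeZero n] (hR : NonCrossingRel R) (heq : Equivalence R) (m : ℕ)
    {a b c d : ℤ} (hma : m ≤ a) (hab : a < b) (hbc : b < c) (hcd : c < d) (hdm : d < m + n)
    (hac : R (proj n a) (proj n c)) (hbd : R (proj n b) (proj n d)) :
    R (proj n a) (proj n b) := by
  induction m generalizing a b c d with
  | zero =>
    have val {t : ℤ} (hat : a ≤ t) (htd : t ≤ d) : ((proj n t).val : ℤ) = t :=
      val_proj_of_lt (by lia) (by lia)
    have ha := val le_rfl (by lia)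
    have hb := val hab.le (by lia)
    have hc := val (hab.trans hbc).le hcd.le
    have hd := val (by lia) le_rfl
    exact hR _ _ _ _ (by grind) (by grind) (by grind) hac hbd
  | succ m ih =>
    obtain hd | rfl : d < m + n ∨ d = m + n := by lia
    · exact ih (by lia) hab hbc hcd hd hac hbd
    · rw [proj_periodic] at hbd
      have hma := ih le_rfl (by lia) hab hbc (by lia) (heq.symm hbd) hac
      exact heq.symm (heq.trans hbd hma)

theorem NonCrossingRel.proj [NeZero n] (hR : NonCrossingRel R) (heq : Equivalence R)
    {a b c d : ℤ} (hab : a < b) (hbc : b < c) (hcd : c < d) (hda : d < a + n)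
    (hac : R (proj n a) (proj n c)) (hbd : R (proj n b) (proj n d)) :
    R (proj n a) (proj n b) := by
  have hn : (0 : ℤ) < n := by exact_mod_cast NeZero.pos n
  have ha : ((a % n).toNat : ℤ) = a + -(a / n) * n := by
    rw [Int.toNat_of_nonneg (Int.emod_nonneg a hn.ne')]
    linarith [Int.emod_add_ediv_mul a n]
  have h := hR.of_window heq (a % n).toNat ha.le (by lia : _ < b + -(a / n) * n)
    (by lia : _ < c + -(a / n) * n) (by lia : _ < d + -(a / n) * n) (by lia)
  simp only [proj_add_mul] at h
  exact h hac hbd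

end NonCrossing

section Blocks

variable {n : ℕ} {P : Finpartition (Finset.univ : Finset (Fin n))}

theorem rel_equivalence (P : Finpartition (Finset.univ : Finset (Fin n))) :
    Equivalence (Rel P) where
  refl i := (P.exists_mem (Finset.mem_univ i)).imp fun _ h => ⟨h.1, h.2, h.2⟩
  symm := fun ⟨B, hB, hi, hj⟩ => ⟨B, hB, hj, hi⟩
  trans := by
    rintro i j k ⟨B, hB, hi, hj⟩ ⟨B', hB', hj', hk⟩
    obtain rfl := P.eq_of_mem_parts hB hB' hj hj'
    exact ⟨B, hB, hi, hk⟩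

theorem isSingleton_iff_forall {i : Fin n} : IsSingleton P i ↔ ∀ j, Rel P i j → j = i := by
  constructor
  · rintro ⟨B, hB, hi, hcard⟩ j ⟨B', hB', hi', hj⟩
    obtain rfl := P.eq_of_mem_parts hB hB' hi hi'
    exact Finset.card_le_one.1 hcard.le j hj i hi
  · intro h
    obtain ⟨B, hB, hi⟩ := P.exists_mem (Finset.mem_univ i)
    exact ⟨B, hB, hi, Finset.card_eq_one.2
      ⟨i, Finset.eq_singleton_iff_unique_mem.2 ⟨hi, fun j hj => h j ⟨B, hB, hi, hj⟩⟩⟩⟩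

theorem relTilde_equivalence (P : Finpartition (Finset.univ : Finset (Fin n))) :
    Equivalence (RelTilde P) where
  refl i := .inl ((rel_equivalence P).refl i)
  symm := Or.imp (rel_equivalence P).symm And.symm
  trans := by
    rintro i j k (hij | ⟨hi, hj⟩) (hjk | ⟨hj', hk⟩)
    · exact .inl ((rel_equivalence P).trans hij hjk)
    · obtain rfl := isSingleton_iff_forall.1 hj' _ ((rel_equivalence P).symm hij)
      exact .inr ⟨hj', hk⟩
    · obtain rfl := isSingleton_iff_forall.1 hj _ hjk
      exact .inr ⟨hi, hj⟩
    · exact .inr ⟨hi, hk⟩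

theorem NonCrossingRel.of_relTilde (h : NonCrossingRel (RelTilde P)) : NonCrossingRel (Rel P) := by
  intro i₁ i₂ i₃ i₄ h₁₂ h₂₃ h₃₄ h₁₃ h₂₄
  obtain h | ⟨hs, -⟩ := h i₁ i₂ i₃ i₄ h₁₂ h₂₃ h₃₄ (.inl h₁₃) (.inl h₂₄)
  · exact h
  · exact absurd (isSingleton_iff_forall.1 hs _ h₁₃) (h₁₂.trans h₂₃).ne'

theorem HalfPairing.eq_of_rel (π : HalfPairing n) {i j k : Fin n} (hj : Rel π.P i j)
    (hk : Rel π.P i k) (hij : j ≠ i) (hik : k ≠ i) : j = k := by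
  obtain ⟨B, hB, hi, hj⟩ := hj
  obtain ⟨B', hB', hi', hk⟩ := hk
  obtain rfl := π.P.eq_of_mem_parts hB hB' hi hi'
  by_contra hjk
  exact (π.card_le B hB).not_gt
    (Finset.two_lt_card.2 ⟨i, hi, j, hj, k, hk, hij.symm, hik.symm, hjk⟩)

theorem HalfPairing.ext_rel {π π' : HalfPairing n} (h : ∀ x y, Rel π.P x y ↔ Rel π'.P x y) :
    π = π' := by
  have rel_iff (P : Finpartition (Finset.univ : Finset (Fin n))) (x y : Fin n) :
      Rel P x y ↔ x ∈ P.part y := P.mem_part_iff_exists.symm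
  have mem_parts_iff (P : Finpartition (Finset.univ : Finset (Fin n))) (B : Finset (Fin n)) :
      B ∈ P.parts ↔ ∃ x, P.part x = B := by
    constructor
    · intro hB
      obtain ⟨x, hx⟩ := P.nonempty_of_mem_parts hB
      exact ⟨x, P.part_eq_of_mem hB hx⟩
    · rintro ⟨x, rfl⟩
      exact P.part_mem.2 (Finset.mem_univ x)
  obtain ⟨P, _⟩ := π
  obtain ⟨P', _⟩ := π'
  have hpart (x : Fin n) : P.part x = P'.part x := by
    ext y
    rw [← rel_iff, ← rel_iff]
    exact h y x
  obtain rfl : P = P' := by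
    ext B
    simp only [mem_parts_iff, hpart]
  rfl

end Blocks

/-! ### Half-pairings and their lifts -/

namespace ArcDiagram

variable {n : ℕ} [NeZero n] {D : ArcDiagram n} {π : HalfPairing n}
  {P : Finpartition (Finset.univ : Finset (Fin n))}

/-- The blocks of the partition `P` of the cycle are the projections of the arcs and through strings
of `D`. -/
def Lifts (D : ArcDiagram n) (P : Finpartition (Finset.univ : Finset (Fin n))) : Prop :=
  ∀ t x, Rel P (proj n t) x ↔ x = proj n t ∨ x = proj n (D.mate t)

theorem proj_mate_eq_iff {t : ℤ} : proj n (D.mate t) = proj n t ↔ D.Through t := by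
  refine ⟨fun h => eq_of_proj_eq h ?_, congrArg _⟩
  have := D.mate_lt t
  have := D.lt_mate t
  grind

theorem Lifts.isSingleton_iff (hD : D.Lifts P) {t : ℤ} :
    IsSingleton P (proj n t) ↔ D.Through t := by
  simp only [isSingleton_iff_forall, hD t, ← proj_mate_eq_iff, forall_eq_or_imp, forall_eq,
    true_and]

theorem Lifts.pairs_iff (hD : D.Lifts π.P) {t : ℤ} {x : Fin n} :
    Pairs π (proj n t) x ↔ ¬D.Through t ∧ x = proj n (D.mate t) := by
  rw [Pairs, hD t, ← proj_mate_eq_iff]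
  grind

theorem Lifts.unique {π' : HalfPairing n} (hπ : D.Lifts π.P) (hπ' : D.Lifts π'.P) : π = π' := by
  refine HalfPairing.ext_rel fun x y => ?_
  rw [← proj_val x, hπ, hπ']

theorem Lifts.outOriented_iff (hD : D.Lifts π.P) {t : ℤ} :
    OutOriented π (proj n t) ↔ D.Out t := by
  rw [OutOriented, hD.isSingleton_iff]
  simp only [hD.pairs_iff]
  obtain ht | ht | ht := lt_trichotomy t (D.mate t)
  · refine iff_of_true (.inr ⟨_, ⟨ht.ne', rfl⟩, ?_⟩) ht.le
    rw [forall_inCyc_iff ht.le (D.mate_lt t)]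
    intro s hts hst hs
    obtain rfl | hts := hts.eq_or_lt
    · exact ht.ne' (hD.isSingleton_iff.1 hs)
    · exact through_notMem_arc (hD.isSingleton_iff.1 hs) ⟨hts, hst⟩
  · exact iff_of_true (.inl ht.symm) ht.le
  · refine iff_of_false ?_ (not_out.2 ht)
    rintro (h | ⟨_, ⟨-, rfl⟩, hfree⟩)
    · exact ht.ne h
    rw [← proj_periodic (D.mate t), forall_inCyc_iff (D.lt_mate t).le (by lia)] at hfree
    obtain ⟨s, hts, hst, hs⟩ := D.exists_through_add t
    have hms : D.mate t + n < s := by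
      by_contra! hle
      exact hfree s hts hle (hD.isSingleton_iff.2 hs)
    have hs' : D.Through (s + -1 * n) := through_add_mul.2 hs
    exact through_notMem_arc (t := D.mate t) hs' ⟨by lia, by rw [D.mate_mate]; lia⟩

theorem closed_of_forall_exists {a b : ℤ} (hba : b ≤ a + n)
    (h : ∀ t, a ≤ t → t < b → ¬D.Through t ∧ ∃ u, a ≤ u ∧ u < b ∧ proj n u = proj n (D.mate t)) :
    D.Closed a b := by
  intro t hat htb
  obtain ⟨ht, u, hau, hub, hu⟩ := h t hat htb
  suffices hmate : u = D.mate t from ⟨hmate ▸ hau, hmate ▸ hub, ht⟩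
  by_contra hne
  have hfar : ¬(D.mate t - n < u ∧ u < D.mate t + n) := fun h =>
    hne (eq_of_proj_eq hu (by grind))
  obtain hlt | hlt : D.mate t < a ∨ b ≤ D.mate t := by grind
  · obtain ⟨s, hms, hsm, hs⟩ := D.exists_through_add (D.mate t + 1)
    have hsb : s < b := by lia
    obtain has | hsa := le_or_gt a s
    · exact (h s has hsb).1 hs
    · exact through_notMem_arc (t := D.mate t) hs ⟨by lia, by rw [D.mate_mate]; lia⟩
  · obtain ⟨s, has, hsa, hs⟩ := D.exists_through_add a
    obtain hsb | hbs := lt_or_ge s b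
    · exact (h s has hsb).1 hs
    · exact through_notMem_arc (t := t) hs ⟨by lia, by lia⟩

theorem Closed.right_lt {a b : ℤ} (h : D.Closed a b) : b < a + n := by
  obtain ⟨s, has, hsa, hs⟩ := D.exists_through_add a
  by_contra! hle
  exact (h s has (hsa.trans_le hle)).2.2 hs

theorem Lifts.covers_iff (hD : D.Lifts π.P) {x : Fin n} {t : ℤ} :
    NCC.Covers π x (proj n t) ↔ D.Out t ∧ ∃ i, proj n i = x ∧ D.Covers i t := by
  constructor
  · rintro ⟨hx, ht, h⟩
    refine ⟨hD.outOriented_iff.1 ht, ?_⟩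
    obtain ⟨i, hi, hit, rfl⟩ := exists_proj_eq (t - n) x
    refine ⟨i, rfl, by lia, hD.outOriented_iff.1 hx, ?_⟩
    rw [cnext_proj, cprev_proj] at h
    obtain rfl | hne := eq_or_ne t (i + 1)
    · exact Closed.nil _
    obtain h | h := h
    · exact absurd (eq_of_proj_eq h (by grind)) hne
    rw [forall_inCyc_iff (by lia) (by lia)] at h
    refine closed_of_forall_exists (by lia) fun u hiu hut => ?_
    obtain ⟨y, -, hy, hpair⟩ := h u hiu (by lia)
    obtain ⟨hu, rfl⟩ := hD.pairs_iff.1 hpair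
    obtain ⟨v, hiv, hvi, hv⟩ := exists_proj_eq (i + 1) (proj n (D.mate u))
    rw [← hv, inCyc_proj_iff (by lia) (by lia) hiv hvi] at hy
    exact ⟨hu, v, hiv, by lia, hv⟩
  · rintro ⟨ht, i, rfl, hit, hi, hc⟩
    refine ⟨hD.outOriented_iff.2 hi, hD.outOriented_iff.2 ht, ?_⟩
    have hti := hc.right_lt
    rw [cnext_proj, cprev_proj]
    obtain rfl | hne := eq_or_ne t (i + 1)
    · exact .inl rfl
    right
    rw [forall_inCyc_iff (by lia) (by lia)]
    intro u hiu hut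
    obtain ⟨him, hmt, hu⟩ := hc u hiu (by lia)
    refine ⟨proj n (D.mate u), proj_mate_eq_iff.not.2 hu, ?_, hD.pairs_iff.2 ⟨hu, rfl⟩⟩
    rw [inCyc_proj_iff] <;> lia

/-- `u` is the other end of the arc (or the through string) at `t` in the lift of `π`: of all points
above the block of `t`, it is the one not separated from `t` by a through string. -/
def IsMate (π : HalfPairing n) (t u : ℤ) : Prop :=
  Rel π.P (proj n t) (proj n u) ∧ |u - t| < n ∧
    (u = t ↔ ∃ s ∈ Set.uIcc t u, IsSingleton π.P (proj n s))

theorem IsMate.symm {t u : ℤ} (h : IsMate π t u) : IsMate π u t := by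
  obtain ⟨hrel, hdist, hfree⟩ := h
  exact ⟨(rel_equivalence _).symm hrel, by rwa [abs_sub_comm], by rwa [Set.uIcc_comm, eq_comm]⟩

theorem isMate_self_iff {t : ℤ} : IsMate π t t ↔ IsSingleton π.P (proj n t) := by
  simp [IsMate, (rel_equivalence π.P).refl, NeZero.pos n]

theorem IsMate.not_isSingleton {t u s : ℤ} (h : IsMate π t u) (htu : t ≠ u)
    (hs : s ∈ Set.uIcc t u) : ¬IsSingleton π.P (proj n s) :=
  fun hsing => htu (h.2.2.2 ⟨s, hs, hsing⟩).symm

theorem IsMate.proj_ne {t u : ℤ} (h : IsMate π t u) (htu : t ≠ u) : proj n u ≠ proj n t :=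
  fun heq => htu (eq_of_proj_eq heq h.2.1).symm

theorem lt_add_of_forall_not_isSingleton (π : HalfPairing n) {a b : ℤ}
    (h : ∀ s, a ≤ s → s ≤ b → ¬IsSingleton π.P (proj n s)) : b + 1 < a + n := by
  obtain ⟨x, hx⟩ := π.exists_singleton
  obtain ⟨s, has, hsa, rfl⟩ := exists_proj_eq a x
  by_contra! hle
  exact h s has (by lia) hx

theorem IsMate.unique {t u v : ℤ} (hu : IsMate π t u) (hv : IsMate π t v) : u = v := by
  wlog huv : u < v generalizing u v
  · obtain h | h := (not_lt.1 huv).eq_or_lt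
    · exact h.symm
    · exact (this hv hu h).symm
  by_cases ht : IsSingleton π.P (proj n t)
  · rw [hu.2.2.2 ⟨t, Set.left_mem_uIcc, ht⟩, hv.2.2.2 ⟨t, Set.left_mem_uIcc, ht⟩]
  have htu : t ≠ u := by rintro rfl; exact ht (isMate_self_iff.1 hu)
  have htv : t ≠ v := by rintro rfl; exact ht (isMate_self_iff.1 hv)
  have hproj := π.eq_of_rel hu.1 hv.1 (hu.proj_ne htu) (hv.proj_ne htv)
  have hlt := lt_add_of_forall_not_isSingleton π (a := min t u) (b := max t v) fun s hs hs' => by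
    obtain h | h : s ∈ Set.uIcc t u ∨ s ∈ Set.uIcc t v := by
      simp only [Set.mem_uIcc]; grind
    · exact hu.not_isSingleton htu h
    · exact hv.not_isSingleton htv h
  exact eq_of_proj_eq hproj (by grind)

theorem IsMate.not_crossing {a b c d : ℤ} (hac : IsMate π a c) (hbd : IsMate π b d) (hab : a < b)
    (hbc : b < c) (hcd : c < d) : False := by
  have hfree_ac {s : ℤ} (h : a ≤ s ∧ s ≤ c) : ¬IsSingleton π.P (proj n s) :=
    hac.not_isSingleton (by lia) (Set.mem_uIcc_of_le h.1 h.2)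
  have hfree_bd {s : ℤ} (h : b ≤ s ∧ s ≤ d) : ¬IsSingleton π.P (proj n s) :=
    hbd.not_isSingleton (by lia) (Set.mem_uIcc_of_le h.1 h.2)
  have hda := lt_add_of_forall_not_isSingleton π (a := a) (b := d) fun s has hsd => by
    obtain hsc | hcs := le_or_gt s c
    · exact hfree_ac ⟨has, hsc⟩
    · exact hfree_bd ⟨by lia, hsd⟩
  obtain hrel | ⟨ha, -⟩ := π.nc_tilde.proj (relTilde_equivalence π.P) hab hbc hcd (by lia)
    (.inl hac.1) (.inl hbd.1)
  · have hba : proj n b ≠ proj n a := fun h => hab.ne' (eq_of_proj_eq h (by grind))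
    have hproj := π.eq_of_rel hac.1 hrel (hac.proj_ne (by lia)) hba
    exact hbc.ne' (eq_of_proj_eq hproj (by grind))
  · exact hfree_ac ⟨le_rfl, by lia⟩ ha

theorem IsMate.nested {t s u v : ℤ} (hts : IsMate π t s) (huv : IsMate π u v) (htu : t < u)
    (hus : u < s) : t < v ∧ v < s ∧ v ≠ u := by
  have hvt : v ≠ t := by rintro rfl; exact hus.ne (huv.symm.unique hts)
  have hvs : v ≠ s := by rintro rfl; exact htu.ne (hts.symm.unique huv.symm)
  refine ⟨?_, ?_, ?_⟩
  · by_contra! hle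
    exact huv.symm.not_crossing hts (by lia) htu hus
  · by_contra! hle
    exact hts.not_crossing huv htu hus (by lia)
  · rintro rfl
    exact hts.not_isSingleton (by lia) (Set.mem_uIcc_of_le htu.le hus.le) (isMate_self_iff.1 huv)

theorem IsMate.add {t u : ℤ} (h : IsMate π t u) : IsMate π (t + n) (u + n) := by
  refine ⟨by simpa only [proj_periodic _] using h.1, by simpa using h.2.1, ?_⟩
  rw [add_left_inj, h.2.2]
  simp only [← Set.image_add_const_uIcc, Set.exists_mem_image, proj_periodic _]

theorem isMate_of_forall {t u : ℤ} (hrel : Rel π.P (proj n t) (proj n u)) (htu : t < u)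
    (hut : u < t + n) (hfree : ∀ s, t < s → s < u → ¬IsSingleton π.P (proj n s)) :
    IsMate π t u := by
  have hproj : proj n u ≠ proj n t := fun h => htu.ne' (eq_of_proj_eq h (by grind))
  refine ⟨hrel, by grind, iff_of_false htu.ne' ?_⟩
  rintro ⟨s, hs, hsing⟩
  rw [Set.uIcc_of_le htu.le] at hs
  obtain rfl | hts := hs.1.eq_or_lt
  · exact hproj (isSingleton_iff_forall.1 hsing _ hrel)
  obtain rfl | hsu := hs.2.eq_or_lt
  · exact hproj (isSingleton_iff_forall.1 hsing _ ((rel_equivalence _).symm hrel)).symm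
  · exact hfree s hts hsu hsing

theorem exists_isMate (π : HalfPairing n) (t : ℤ) : ∃ u, IsMate π t u := by
  by_cases ht : IsSingleton π.P (proj n t)
  · exact ⟨t, isMate_self_iff.2 ht⟩
  obtain ⟨x, hx, hne⟩ : ∃ x, Rel π.P (proj n t) x ∧ x ≠ proj n t := by
    rw [isSingleton_iff_forall] at ht
    push Not at ht
    exact ht
  obtain ⟨u, htu, hut, rfl⟩ := exists_proj_eq t x
  have htu : t < u := lt_of_le_of_ne htu (by rintro rfl; exact hne rfl)
  by_cases hfree : ∀ s, t < s → s < u → ¬IsSingleton π.P (proj n s)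
  · exact ⟨u, isMate_of_forall hx htu hut hfree⟩
  push Not at hfree
  obtain ⟨s, hts, hsu, hs⟩ := hfree
  have hrel : Rel π.P (proj n (u - n)) (proj n t) := by
    rw [proj_periodic.sub_eq]
    exact (rel_equivalence _).symm hx
  refine ⟨u - n, (isMate_of_forall hrel (by lia) (by lia) fun s' hus' hst' hs' => ht ?_).symm⟩
  obtain h | h := π.nc_tilde.proj (relTilde_equivalence π.P) hst' hts hsu (by lia)
    (.inr ⟨hs', hs⟩) (.inl hx)
  · rwa [isSingleton_iff_forall.1 hs' _ h]
  · exact h.2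

theorem exists_lifts (π : HalfPairing n) : ∃ D : ArcDiagram n, D.Lifts π.P := by
  have existsUnique (t : ℤ) : ∃! u, IsMate π t u :=
    existsUnique_of_exists_of_unique (exists_isMate π t) fun _ _ => IsMate.unique
  have fixed : ∃ t, IsMate π t t := by
    obtain ⟨x, hx⟩ := π.exists_singleton
    exact ⟨x.val, isMate_self_iff.2 (by rwa [proj_val])⟩
  obtain ⟨D, hD⟩ := exists_of_rel (n := n) (IsMate π) existsUnique (fun _ _ => IsMate.symm)
    (fun _ _ => IsMate.add) (fun _ _ _ _ => IsMate.nested) fixed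
  refine ⟨D, fun t x => ⟨fun hx => or_iff_not_imp_left.2 fun hne => ?_, ?_⟩⟩
  · have hmate := (hD t _).1 rfl
    refine π.eq_of_rel hx hmate.1 hne fun h => hne ?_
    have ht : IsMate π t t := (hD t t).1 (proj_mate_eq_iff.1 h)
    exact isSingleton_iff_forall.1 (isMate_self_iff.1 ht) _ hx
  · rintro (rfl | rfl)
    · exact (rel_equivalence _).refl _
    · exact ((hD t _).1 rfl).1

end ArcDiagram

namespace ArcDiagram

variable {n : ℕ} [NeZero n] {D : ArcDiagram n} {P : Finpartition (Finset.univ : Finset (Fin n))}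

variable (D) in
/-- The map induced by `mate` on the cycle. -/
def cycMate (x : Fin n) : Fin n :=
  proj n (D.mate x.val)

theorem cycMate_proj (t : ℤ) : D.cycMate (proj n t) = proj n (D.mate t) := by
  obtain ⟨q, hq⟩ := exists_eq_add_mul (proj_val (proj n t))
  rw [cycMate, hq, mate_add_mul, proj_add_mul]

theorem cycMate_cycMate (x : Fin n) : D.cycMate (D.cycMate x) = x := by
  rw [← proj_val x, cycMate_proj, cycMate_proj, D.mate_mate]

variable (D) in
/-- The partition of the cycle into the orbits of `cycMate`. -/
noncomputable def cycPartition : Finpartition (Finset.univ : Finset (Fin n)) :=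
  Finpartition.ofSetoid
    { r := fun x y => y = x ∨ y = D.cycMate x
      iseqv :=
        { refl := fun _ => .inl rfl
          symm := by grind [cycMate_cycMate]
          trans := by grind [cycMate_cycMate] } }

theorem rel_cycPartition {x y : Fin n} : Rel D.cycPartition x y ↔ y = x ∨ y = D.cycMate x := by
  have h : Rel D.cycPartition y x ↔ y ∈ D.cycPartition.part x :=
    Finpartition.mem_part_iff_exists _ |>.symm
  have hcomm : Rel D.cycPartition x y ↔ Rel D.cycPartition y x :=
    ⟨(rel_equivalence _).symm, (rel_equivalence _).symm⟩
  rw [hcomm, h, cycPartition, Finpartition.mem_part_ofSetoid_iff_rel]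
  rfl

theorem lifts_cycPartition : D.Lifts D.cycPartition := fun t x => by
  rw [rel_cycPartition, cycMate_proj]

theorem Lifts.mate_eq_or_eq_sub (hD : D.Lifts P) {t u : ℤ} (h : Rel P (proj n t) (proj n u))
    (htu : t < u) (hut : u < t + n) : D.mate t = u ∨ D.mate t = u - n := by
  have hne : proj n u ≠ proj n t := fun h => htu.ne' (eq_of_proj_eq h (by grind))
  have hu := (hD t _).1 h |>.resolve_left hne
  have := D.mate_lt t
  have := D.lt_mate t
  obtain hlt | hle := lt_or_ge t (D.mate t)
  · exact .inl (eq_of_proj_eq hu.symm (by grind))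
  · rw [← proj_periodic.sub_eq] at hu
    exact .inr (eq_of_proj_eq hu.symm (by grind))

theorem Lifts.relTilde_or_arc (hD : D.Lifts P) {t u : ℤ} (h : RelTilde P (proj n t) (proj n u))
    (htu : t < u) (hut : u < t + n) :
    (D.Through t ∧ D.Through u) ∨ D.mate t = u ∨ D.mate t = u - n := by
  obtain h | ⟨ht, hu⟩ := h
  · exact .inr (hD.mate_eq_or_eq_sub h htu hut)
  · exact .inl ⟨hD.isSingleton_iff.1 ht, hD.isSingleton_iff.1 hu⟩

theorem Lifts.through_and_through (hD : D.Lifts P) {a b c d : ℤ} (hab : a < b) (hbc : b < c)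
    (hcd : c < d) (hda : d < a + n) (hac : RelTilde P (proj n a) (proj n c))
    (hbd : RelTilde P (proj n b) (proj n d)) : D.Through a ∧ D.Through b := by
  have hb := hD.relTilde_or_arc hbd (by lia) (by lia)
  have mate_of_eq_sub {t u : ℤ} (h : D.mate t = u - n) : D.mate u = t + n := by
    rw [← sub_add_cancel u (n : ℤ), ← h, D.mate_add, D.mate_mate]
  obtain ⟨ha, hc⟩ | ha | ha := hD.relTilde_or_arc hac (by lia) (by lia)
  · obtain ⟨hb, -⟩ | hb | hb := hb
    · exact ⟨ha, hb⟩
    · exact absurd ⟨hbc, by lia⟩ (through_notMem_arc (t := b) hc)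
    · exact absurd ⟨by lia, by rw [← hb, D.mate_mate]; lia⟩ (through_notMem_arc (t := d - n) ha)
  · have hnest := D.nested hab (hbc.trans_eq ha.symm)
    obtain ⟨hb, -⟩ | hb | hb := hb
    · exact absurd hb hnest.2.2
    all_goals lia
  · have ha := mate_of_eq_sub ha
    have hnest := D.nested hcd (hda.trans_eq ha.symm)
    obtain ⟨-, hd⟩ | hb | hb := hb
    · exact absurd hd hnest.2.2
    · rw [← hb, D.mate_mate] at hnest
      lia
    · rw [mate_of_eq_sub hb] at hnest
      lia

theorem Lifts.nonCrossingRel_relTilde (hD : D.Lifts P) : NonCrossingRel (RelTilde P) := by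
  intro i₁ i₂ i₃ i₄ h₁₂ h₂₃ h₃₄ h₁₃ h₂₄
  rw [← proj_val i₁, ← proj_val i₃] at h₁₃
  rw [← proj_val i₂, ← proj_val i₄] at h₂₄
  have h₄₁ : i₄.val < i₁.val + n := i₄.isLt.trans_le (Nat.le_add_left _ _)
  have h := hD.through_and_through (by exact_mod_cast h₁₂) (by exact_mod_cast h₂₃)
    (by exact_mod_cast h₃₄) (by exact_mod_cast h₄₁) h₁₃ h₂₄
  rw [← proj_val i₁, ← proj_val i₂]
  exact .inr ⟨hD.isSingleton_iff.2 h.1, hD.isSingleton_iff.2 h.2⟩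

theorem card_le_two_of_mem_cycPartition {B : Finset (Fin n)} (hB : B ∈ D.cycPartition.parts) :
    B.card ≤ 2 := by
  obtain ⟨x, hx⟩ := D.cycPartition.nonempty_of_mem_parts hB
  refine (Finset.card_le_card fun y hy => ?_).trans (Finset.card_le_two (a := x) (b := D.cycMate x))
  simpa using rel_cycPartition.1 ⟨B, hB, hx, hy⟩

theorem exists_halfPairing (D : ArcDiagram n) : ∃ π : HalfPairing n, D.Lifts π.P := by
  have hD := D.lifts_cycPartition
  exact ⟨{ P := D.cycPartition
           card_le := fun _ => card_le_two_of_mem_cycPartition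
           exists_singleton := D.exists_fixed.imp' (proj n) fun _ => hD.isSingleton_iff.2
           nc := .of_relTilde hD.nonCrossingRel_relTilde
           nc_tilde := hD.nonCrossingRel_relTilde }, hD⟩

end ArcDiagram

/-! ### Admissible half-pairings -/

theorem sort_throughFinset {n : ℕ} (π : HalfPairing n) :
    (throughFinset π).sort (· ≤ ·) = (List.finRange n).filter (IsSingleton π.P) :=
  (Finset.sortedLT_sort _).eq_of_mem_iff
    ((List.sortedLT_finRange n).pairwise.filter _).sortedLT (by simp [throughFinset])

theorem length_throughWord {n N : ℕ} (w : Fin n → Letter N) (π : HalfPairing n) :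
    (throughWord w π).length = (throughFinset π).card := by
  rw [throughWord, List.length_map, Finset.length_sort]

namespace ArcDiagram

variable {n N : ℕ} [NeZero n] {D : ArcDiagram n} {π : HalfPairing n} {w : Fin n → Letter N}

theorem map_proj_range : (Int.range 0 n).map (proj n) = List.finRange n := by
  refine List.map_injective_iff.2 Fin.val_injective ?_
  rw [List.map_map, List.map_coe_finRange_eq_range, Int.range, List.map_map]
  refine (List.map_congr_left fun i hi => ?_).trans (List.map_id _)
  have hi : i < n := by simpa using hi
  have := val_proj_of_lt (n := n) (t := i) (by lia) (by lia)
  simpa using this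

theorem ofFn_eq_map_range : List.ofFn w = (Int.range 0 n).map (w ∘ proj n) := by
  rw [← List.map_map, map_proj_range, List.ofFn_eq_map]

theorem Lifts.throughWord_eq (hD : D.Lifts π.P) :
    throughWord w π = (D.throughs 0 n).map (w ∘ proj n) := by
  have hcomp : (fun x => decide (IsSingleton π.P x)) ∘ proj n = fun t => decide (D.Through t) :=
    funext fun t => decide_eq_decide.2 hD.isSingleton_iff
  rw [throughWord, sort_throughFinset, ← map_proj_range, List.filter_map, List.map_map, hcomp,
    throughs]

theorem compatible_of_cycReduced {W : ℤ → Letter N} (hper : Function.Periodic W n)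
    (hv : CycReduced ((D.throughs 0 n).map W))
    (h : ∀ i t, D.Covers i t → ¬D.Through t → (W t = linv (W i) ↔ ¬D.Out t)) :
    D.Compatible W := by
  intro i t hit
  by_cases ht : D.Through t
  · exact iff_of_false (ne_linv_of_covers hper hv hit ht) (not_not.2 ht.out)
  · exact h i t hit ht

theorem Lifts.compatible_of_admissible (hD : D.Lifts π.P) (h : Admissible w π) :
    D.Compatible (w ∘ proj n) := by
  obtain ⟨⟨hpairs, -, hv⟩, hcovers⟩ := h
  refine compatible_of_cycReduced (proj_periodic.comp w) (hD.throughWord_eq ▸ hv)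
    fun i t hit ht => ?_
  by_cases hout : D.Out t
  · refine iff_of_false (fun heq => ?_) (not_not.2 hout)
    exact hcovers _ _ (hD.covers_iff.2 ⟨hout, i, rfl, hit⟩) (eq_linv_comm.1 heq)
  · obtain rfl := hit.unique (covers_mate (not_out.1 hout))
    exact iff_of_true (hpairs _ _ (hD.pairs_iff.2 ⟨ht, rfl⟩)) hout

theorem Lifts.admissible_of_compatible (hD : D.Lifts π.P) (hv : CycReduced (throughWord w π))
    (h : D.Compatible (w ∘ proj n)) : Admissible w π := by
  have hW (t : ℤ) (ht : ¬D.Through t) : w (proj n t) = linv (w (proj n (D.mate t))) :=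
    h.eq_linv_mate ht
  refine ⟨⟨fun x y hxy => ?_, ?_, hv⟩, fun x y hxy heq => ?_⟩
  · rw [← proj_val x, hD.pairs_iff] at hxy
    rw [hxy.2, ← hW _ hxy.1, proj_val]
  · rw [ofFn_eq_map_range, hD.throughWord_eq]
    exact cycReducesTo_throughs hW (proj_periodic.comp w) (by lia) (by lia)
      (by simpa using Closed.nil _)
  · rw [← proj_val y, hD.covers_iff] at hxy
    obtain ⟨hout, i, rfl, hcov⟩ := hxy
    refine (h _ _ hcov).1 (eq_linv_comm.1 ?_) hout
    simpa [proj_val] using heq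

end ArcDiagram

open ArcDiagram in
theorem Admissible.unique {n N : ℕ} [NeZero n] {π π' : HalfPairing n} {w : Fin n → Letter N}
    (hπ : Admissible w π) (hπ' : Admissible w π') : π = π' := by
  obtain ⟨D, hD⟩ := exists_lifts π
  obtain ⟨D', hD'⟩ := exists_lifts π'
  obtain rfl := (hD.compatible_of_admissible hπ).unique (hD'.compatible_of_admissible hπ')
  exact hD.unique hD'

/-! ### Counting half-pairings -/

/-- The inward oriented points of `π`: one for each pair. -/
noncomputable def inFinset {n : ℕ} (π : HalfPairing n) : Finset (Fin n) :=
  Finset.univ.filter fun x => ¬OutOriented π x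

section CountingHalfPairings

open ArcDiagram

variable {n : ℕ} [NeZero n]

theorem card_filter_outOriented_and_not_isSingleton (π : HalfPairing n) :
    (Finset.univ.filter fun x => OutOriented π x ∧ ¬IsSingleton π.P x).card =
      (inFinset π).card := by
  obtain ⟨D, hD⟩ := exists_lifts π
  have hmem (t : ℤ) : OutOriented π (proj n t) ∧ ¬IsSingleton π.P (proj n t) ↔
      ¬OutOriented π (proj n (D.mate t)) := by
    rw [hD.outOriented_iff, hD.outOriented_iff, hD.isSingleton_iff, not_out, D.mate_mate,
      lt_iff_le_and_ne, ne_comm]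
    rfl
  refine Finset.card_nbij' D.cycMate D.cycMate (fun x hx => ?_) (fun x hx => ?_)
    (fun x _ => cycMate_cycMate x) fun x _ => cycMate_cycMate x
  · have hx := (Finset.mem_filter.1 hx).2
    rw [← proj_val x, hmem] at hx
    exact Finset.mem_filter.2 ⟨Finset.mem_univ _, hx⟩
  · have hx := (Finset.mem_filter.1 hx).2
    rw [← proj_val x, ← D.mate_mate x.val, ← hmem] at hx
    exact Finset.mem_filter.2 ⟨Finset.mem_univ _, hx⟩

theorem card_throughFinset_add (π : HalfPairing n) :
    (throughFinset π).card + 2 * (inFinset π).card = n := by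
  have hthrough : throughFinset π =
      Finset.univ.filter fun x => OutOriented π x ∧ IsSingleton π.P x :=
    Finset.filter_congr fun x _ => ⟨fun h => ⟨.inl h, h⟩, And.right⟩
  have hout := Finset.card_filter_add_card_filter_not
    (s := Finset.univ.filter (OutOriented π)) (IsSingleton π.P)
  have huniv := Finset.card_filter_add_card_filter_not (s := Finset.univ) (OutOriented π)
  rw [Finset.filter_filter, Finset.filter_filter, ← hthrough,
    card_filter_outOriented_and_not_isSingleton] at hout
  rw [Finset.card_univ, Fintype.card_fin, ← inFinset] at huniv
  lia

theorem inFinset_injective : Function.Injective (inFinset (n := n)) := by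
  intro π π' h
  obtain ⟨D, hD⟩ := exists_lifts π
  obtain ⟨D', hD'⟩ := exists_lifts π'
  have hDD' : D = D' := ext_out fun t => by
    have ht := Finset.ext_iff.1 h (proj n t)
    rw [inFinset, inFinset, Finset.mem_filter_univ, Finset.mem_filter_univ, hD.outOriented_iff,
      hD'.outOriented_iff] at ht
    exact not_iff_not.1 ht
  exact hD.unique (hDD' ▸ hD')

theorem exists_inFinset_eq {I : Finset (Fin n)} (hI : 2 * I.card < n) :
    ∃ π : HalfPairing n, inFinset π = I := by
  let f (t : ℤ) : ℤ := if proj n t ∈ I then -1 else 1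
  have hsum : ∑ j : Fin n, f (j : ℕ) = n - 2 * I.card := by
    have hf (j : Fin n) : f (j : ℕ) = 1 - 2 * if j ∈ I then 1 else 0 := by
      simp only [f, proj_val]
      split_ifs <;> rfl
    simp [hf, Finset.sum_sub_distrib, mul_comm]
  obtain ⟨D, hD⟩ := exists_arcDiagram_out_iff (n := n) (f := f) (fun t => by grind)
    (fun t => by simp only [f, proj_periodic t]) (by lia)
  obtain ⟨π, hπ⟩ := exists_halfPairing D
  refine ⟨π, Finset.ext fun x => ?_⟩
  rw [inFinset, Finset.mem_filter_univ, ← proj_val x, hπ.outOriented_iff, hD]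
  grind

instance : Finite (HalfPairing n) :=
  .of_injective _ inFinset_injective

theorem card_halfPairing {k m : ℕ} (hk : 0 < k) (hn : k + 2 * m = n) :
    Nat.card {π : HalfPairing n // (throughFinset π).card = k} = n.choose m := by
  have hcard (π : HalfPairing n) : (throughFinset π).card = k ↔ (inFinset π).card = m := by
    have := card_throughFinset_add π
    lia
  have hbij : Function.Bijective
      (Subtype.map inFinset fun π => (hcard π).1 :
        {π : HalfPairing n // _} → {I : Finset (Fin n) // I.card = m}) := by
    refine ⟨Subtype.map_injective _ inFinset_injective, fun ⟨I, hI⟩ => ?_⟩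
    obtain ⟨π, rfl⟩ := exists_inFinset_eq (I := I) (by lia)
    exact ⟨⟨π, (hcard π).2 hI⟩, rfl⟩
  rw [Nat.card_eq_of_bijective _ hbij, Nat.card_eq_fintype_card, Fintype.card_finset_len,
    Fintype.card_fin]

end CountingHalfPairings

/-! ### Counting the words of a half-pairing -/

section Labelings

variable {ι α : Type*}

theorem existsUnique_forall_eq [Nonempty α] {r : ι → ι → Prop} (hr : WellFounded r)
    (F : ι → (ι → α) → α)
    (hF : ∀ x w w', (∀ y, r y x → w y = w' y) → F x w = F x w') :
    ∃! w : ι → α, ∀ x, w x = F x w := by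
  let w : ι → α := hr.fix fun x ih =>
    F x fun y => if h : r y x then ih y h else Classical.ofNonempty
  have hw (x : ι) : w x = F x w := by
    rw [show w x = _ from hr.fix_eq _ x]
    exact hF x _ _ fun y hy => dif_pos hy
  refine ⟨w, hw, fun w' hw' => funext fun x => ?_⟩
  induction x using hr.induction with
  | _ x ih => rw [hw', hw, hF x _ _ ih]

/-- If the number of labels allowed at each point is known, and the set of these depends only on the
labels of earlier points, then the labels can be chosen one after another. -/
theorem card_forall_mem [Nonempty α] [Fintype ι] {r : ι → ι → Prop} (hr : WellFounded r)
    (C : ι → (ι → α) → Finset α) (c : ι → ℕ)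
    (hC : ∀ x w w', (∀ y, r y x → w y = w' y) → C x w = C x w')
    (hcard : ∀ x w, (C x w).card = c x) :
    Nat.card {w : ι → α // ∀ x, w x ∈ C x w} = ∏ x, c x := by
  let e (x : ι) (w : ι → α) : C x w ≃ Fin (c x) := Finset.equivFinOfCardEq (hcard x w)
  have symm_congr {s s' : Finset α} {m : ℕ} (h : s.card = m) (h' : s'.card = m) (hs : s = s')
      (i : Fin m) : ((Finset.equivFinOfCardEq h).symm i : α) =
        (Finset.equivFinOfCardEq h').symm i := by
    subst hs
    rfl
  have hbij : Function.Bijective fun (w : {w : ι → α // ∀ x, w x ∈ C x w}) x =>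
      e x w ⟨w.1 x, w.2 x⟩ := by
    refine (Function.bijective_iff_existsUnique _).2 fun g => ?_
    obtain ⟨w, hw, hunique⟩ := existsUnique_forall_eq hr (fun x w => ((e x w).symm (g x) : α))
      fun x w w' h => symm_congr _ _ (hC x w w' h) _
    refine ⟨⟨w, fun x => ?_⟩, funext fun x => ?_, fun w' hw' => Subtype.ext (hunique _ fun x => ?_)⟩
    · rw [hw x]
      exact Subtype.property _
    · rw [← Equiv.eq_symm_apply]
      exact Subtype.ext (hw x)
    · rw [← hw', Equiv.symm_apply_apply]
  rw [Nat.card_eq_of_bijective _ hbij, Nat.card_pi]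
  simp only [Nat.card_eq_fintype_card, Fintype.card_fin]

theorem exists_map_eq_of_nodup [Nonempty α] {l : List ι} (hl : l.Nodup) {v : List α}
    (hv : v.length = l.length) : ∃ f : ι → α, l.map f = v := by
  refine ⟨fun x => v.getD (l.idxOf x) Classical.ofNonempty, List.ext_getElem (by simp [hv]) ?_⟩
  intro i _ hi
  rw [List.getElem_map, hl.idxOf_getElem, List.getD_eq_getElem _ _ hi]

end Labelings

section CountingWords

open ArcDiagram

variable {n N : ℕ} {π : HalfPairing n} {v : List (Letter N)}

/-- The letters that an admissible word may have at `x`, when its letters at the through strings are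
given by `f` and the point covering `x` is `p x`. -/
noncomputable def allowedLetters (π : HalfPairing n) (p : Fin n → Fin n) (f : Fin n → Letter N)
    (x : Fin n) (w : Fin n → Letter N) : Finset (Letter N) :=
  if IsSingleton π.P x then {f x}
  else if OutOriented π x then Finset.univ.erase (linv (w (p x)))
  else {linv (w (p x))}

theorem forall_mem_allowedLetters_iff {p : Fin n → Fin n} {f w : Fin n → Letter N} :
    (∀ x, w x ∈ allowedLetters π p f x w) ↔ (∀ x, IsSingleton π.P x → w x = f x) ∧
      ∀ x, ¬IsSingleton π.P x → (w x = linv (w (p x)) ↔ ¬OutOriented π x) := by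
  rw [← forall_and]
  refine forall_congr' fun x => ?_
  unfold allowedLetters
  split_ifs <;> simp_all

theorem allowedLetters_congr {p : Fin n → Fin n} {f w w' : Fin n → Letter N} {x : Fin n}
    (h : ¬IsSingleton π.P x → w (p x) = w' (p x)) :
    allowedLetters π p f x w = allowedLetters π p f x w' := by
  unfold allowedLetters
  split_ifs with hx
  · rfl
  all_goals rw [h hx]

theorem card_allowedLetters (p : Fin n → Fin n) (f w : Fin n → Letter N) (x : Fin n) :
    (allowedLetters π p f x w).card =
      if OutOriented π x ∧ ¬IsSingleton π.P x then 2 * N - 1 else 1 := by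
  unfold allowedLetters
  split_ifs <;> simp_all [Finset.card_erase_of_mem, mul_comm]

theorem exists_throughWord_eq_iff [Nonempty (Letter N)]
    (hlen : (throughFinset π).card = v.length) : ∃ f : Fin n → Letter N,
      ∀ w, throughWord w π = v ↔ ∀ x, IsSingleton π.P x → w x = f x := by
  obtain ⟨f, rfl⟩ := exists_map_eq_of_nodup ((throughFinset π).sort_nodup (· ≤ ·))
    (hlen.symm.trans (Finset.length_sort _).symm)
  refine ⟨f, fun w => ?_⟩
  rw [throughWord, List.map_inj_left]
  simp only [throughFinset, Finset.mem_sort, Finset.mem_filter_univ]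

variable [NeZero n]

/-- The height is the distance from a fixed through string `t₀`: a point to the right of `t₀` is
covered by a point that is not to the left of `t₀`. -/
theorem ArcDiagram.exists_parent (D : ArcDiagram n) :
    ∃ (p : Fin n → Fin n) (height : Fin n → ℕ), ∀ t, ¬D.Through t →
      height (p (proj n t)) < height (proj n t) ∧ ∃ i, D.Covers i t ∧ proj n i = p (proj n t) := by
  obtain ⟨t₀, h₀⟩ := D.exists_fixed
  choose pos hpos hpos' hproj using exists_proj_eq (n := n) t₀
  have hcov (x : Fin n) : ∃ i, ¬D.Through (pos x) → t₀ ≤ i ∧ D.Covers i (pos x) := by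
    by_cases hx : D.Through (pos x)
    · exact ⟨0, absurd hx⟩
    · have hne : t₀ ≠ pos x := fun h => hx (h ▸ h₀)
      exact (exists_covers h₀ (lt_of_le_of_ne (hpos x) hne)).imp fun _ h _ => h
  choose anc hanc using hcov
  refine ⟨fun x => proj n (anc x), fun x => (pos x - t₀).toNat, fun t ht => ?_⟩
  set x := proj n t
  obtain ⟨q, hq⟩ := exists_eq_add_mul (hproj x)
  obtain ⟨hle, hcovers⟩ := hanc x (by rwa [hq, through_add_mul])
  refine ⟨?_, anc x + -q * n, ?_, proj_add_mul _ _⟩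
  · have hlt := hcovers.1
    have hpos_anc : pos (proj n (anc x)) = anc x :=
      eq_of_proj_eq (hproj _) (by grind)
    change (pos (proj n (anc x)) - t₀).toNat < (pos x - t₀).toNat
    rw [hpos_anc]
    lia
  · have h := hcovers.add_mul (-q)
    rwa [hq, neg_mul, add_neg_cancel_right, ← neg_mul] at h

theorem admissible_and_throughWord_eq_iff {D : ArcDiagram n} (hD : D.Lifts π.P)
    {p : Fin n → Fin n}
    (hp : ∀ t, ¬D.Through t → ∃ i, D.Covers i t ∧ proj n i = p (proj n t))
    (hv : CycReduced v) {w : Fin n → Letter N} :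
    Admissible w π ∧ throughWord w π = v ↔ throughWord w π = v ∧
      ∀ x, ¬IsSingleton π.P x → (w x = linv (w (p x)) ↔ ¬OutOriented π x) := by
  rw [and_comm]
  refine and_congr_right fun hw => ⟨fun h x hx => ?_, fun h => ?_⟩
  · rw [← proj_val x, hD.isSingleton_iff] at hx
    obtain ⟨i, hi, hip⟩ := hp _ hx
    have hcompat := hD.compatible_of_admissible h i _ hi
    rwa [← hD.outOriented_iff, Function.comp_apply, Function.comp_apply, hip, proj_val] at hcompat
  · have hv' : CycReduced (throughWord w π) := hw ▸ hv
    refine hD.admissible_of_compatible hv' (compatible_of_cycReduced (proj_periodic.comp w)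
      (hD.throughWord_eq ▸ hv') fun i t hit ht => ?_)
    obtain ⟨j, hj, hjp⟩ := hp t ht
    obtain rfl := hit.unique hj
    rw [← hD.outOriented_iff, Function.comp_apply, Function.comp_apply, hjp]
    exact h _ (hD.isSingleton_iff.not.2 ht)

theorem card_admissible (π : HalfPairing n) (hv : CycReduced v)
    (hlen : (throughFinset π).card = v.length) :
    Nat.card {w : Fin n → Letter N // Admissible w π ∧ throughWord w π = v} =
      (2 * N - 1) ^ (inFinset π).card := by
  obtain ⟨x, hx⟩ := π.exists_singleton
  have hv₀ : v ≠ [] := List.ne_nil_of_length_pos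
    (hlen ▸ Finset.card_pos.2 ⟨x, Finset.mem_filter.2 ⟨Finset.mem_univ x, hx⟩⟩)
  have : Nonempty (Letter N) := ⟨v.head hv₀⟩
  obtain ⟨D, hD⟩ := exists_lifts π
  obtain ⟨p, height, hp⟩ := D.exists_parent
  obtain ⟨f, hf⟩ := exists_throughWord_eq_iff hlen
  have hiff (w : Fin n → Letter N) : Admissible w π ∧ throughWord w π = v ↔
      ∀ x, w x ∈ allowedLetters π p f x w := by
    rw [admissible_and_throughWord_eq_iff hD (fun t ht => (hp t ht).2) hv, hf,
      forall_mem_allowedLetters_iff]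
  have hlocal (x : Fin n) (w w' : Fin n → Letter N)
      (h : ∀ y, height y < height x → w y = w' y) :
      allowedLetters π p f x w = allowedLetters π p f x w' := by
    refine allowedLetters_congr fun hx => h _ ?_
    rw [← proj_val x, hD.isSingleton_iff] at hx
    simpa only [proj_val] using (hp _ hx).1
  rw [Nat.card_congr (Equiv.subtypeEquivRight hiff),
    card_forall_mem (InvImage.wf height wellFounded_lt) _ _ hlocal
      fun x w => card_allowedLetters p f w x,
    Finset.prod_ite, Finset.prod_const, Finset.prod_const_one, mul_one,
    card_filter_outOriented_and_not_isSingleton]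

theorem card_standardCycRed {m : ℕ} (hv : CycReduced v) (hk : 0 < v.length)
    (hn : v.length + 2 * m = n) :
    Nat.card {w : Fin n → Letter N // StandardCycRed w v} = (2 * N - 1) ^ m * n.choose m := by
  let toWord : (Σ π : {π : HalfPairing n // (throughFinset π).card = v.length},
      {w : Fin n → Letter N // Admissible w π ∧ throughWord w π = v}) →
        {w : Fin n → Letter N // StandardCycRed w v} := fun σ => ⟨σ.2, σ.1, σ.2.2⟩
  have hbij : Function.Bijective toWord := by
    refine ⟨?_, fun ⟨w, π, hπ⟩ => ⟨⟨⟨π, hπ.2 ▸ (length_throughWord w π).symm⟩, ⟨w, hπ⟩⟩, rfl⟩⟩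
    rintro ⟨⟨π, hk⟩, w, hw⟩ ⟨⟨π', hk'⟩, w', hw'⟩ h
    obtain rfl : w = w' := congrArg Subtype.val h
    obtain rfl := hw.1.unique hw'.1
    rfl
  have hcard (π : {π : HalfPairing n // (throughFinset π).card = v.length}) :
      Nat.card {w : Fin n → Letter N // Admissible w π ∧ throughWord w π = v} =
        (2 * N - 1) ^ m := by
    have := card_throughFinset_add π.1
    rw [card_admissible π.1 hv π.2, show (inFinset π.1).card = m by have := π.2; lia]
  have := Fintype.ofFinite {π : HalfPairing n // (throughFinset π).card = v.length}
  rw [← Nat.card_eq_of_bijective _ hbij, Nat.card_sigma, Finset.sum_congr rfl fun π _ => hcard π,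
    Finset.sum_const, Finset.card_univ, ← Nat.card_eq_fintype_card, card_halfPairing hk hn,
    smul_eq_mul, mul_comm]

end CountingWords

/-- The number of words of length `n` whose standard cyclic reduction is a
given cyclically reduced word `v` of length `k ≥ 1` is
`(2N-1)^((n-k)/2) * C(n, (n-k)/2)` when `n - k` is even and nonnegative, and
`0` otherwise.  In particular it does not depend on `v`. -/
theorem count_words_with_standard_cyclic_reduction (N n k : ℕ) (hk : 1 ≤ k)
    (v : List (Letter N)) (hvc : CycReduced v) (hvk : v.length = k) :
    Nat.card {w : Fin n → Letter N // StandardCycRed w v} =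
      (if k ≤ n ∧ Even (n - k) then
        (2 * N - 1) ^ ((n - k) / 2) * n.choose ((n - k) / 2)
      else 0) := by
  subst hvk
  split_ifs with h
  · have : NeZero n := ⟨by lia⟩
    have hn := Nat.two_mul_div_two_of_even h.2
    exact card_standardCycRed hvc hk (by lia)
  · have : IsEmpty {w : Fin n → Letter N // StandardCycRed w v} := by
      refine Subtype.isEmpty_of_false fun w => ?_
      rintro ⟨π, -, rfl⟩
      have : NeZero n := ⟨π.exists_singleton.choose.pos.ne'⟩
      have hn := card_throughFinset_add π
      rw [length_throughWord] at h
      exact h ⟨by lia, (inFinset π).card, by lia⟩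
    exact Nat.card_of_isEmpty

end NCC
end

section
/- Let w be a word of length n in the letters u_1^{±1}, ..., u_N^{±1} which reduces cyclically to a word of length k > 0, and let w_∞ = www⋯ be the infinite word obtained by repeating w. If s is a prefix of w_∞ whose number of letters exceeds n(1 + n/k), then the length of the linear reduction of the concatenation ws equals k plus the length of the linear reduction of s, i.e. |ws| = k + |s|. -/
/-!
Write the reduced form of `w` as `c ++ u ++ invRev c` with `u` cyclically reduced. Then `u` has
length `k`: the `m`-th power of a cyclically reduced word of length `ℓ` has norm `m ℓ`, while
conjugation by a fixed element changes norms by a bounded amount.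

A prefix of `w_∞` represents `w ^ q * p = (c u ^ q) (c⁻¹ p)`, where `p` is a prefix of `w`, of
length less than `n ≤ q k`. The reduced word of `c⁻¹ p` cannot begin with `u ^ (-q)`: since
`c ++ invRev u ++ ⋯ ++ invRev u` is reduced, `p = c (c⁻¹ p)` would then have norm at least `q k`.
Hence a nonempty beginning of `u ^ q` survives in the reduced word of `w ^ q * p`, and multiplying
by `w` on the left merely inserts one more copy of `u` after `c`.
-/

namespace NCC

section ReducedWords

open FreeGroup

variable {α : Type*}

lemma isReduced_invRev {L : List (α × Bool)} (h : IsReduced L) : IsReduced (invRev L) := by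
  classical
  rw [isReduced_iff_reduce_eq, reduce_invRev, h.reduce_eq]

lemma eq_mk_not_of_not_imp {a b : α × Bool} (h : ¬(a.1 = b.1 → a.2 = b.2)) : b = (a.1, !a.2) :=
  have ⟨hfst, hsnd⟩ := Classical.not_imp.1 h
  Prod.ext hfst.symm (Bool.eq_not.2 (Ne.symm hsnd))

lemma exists_cancellation {L₁ L₂ : List (α × Bool)} (h₁ : IsReduced L₁) (h₂ : IsReduced L₂) :
    ∃ A C B, L₁ = A ++ C ∧ L₂ = invRev C ++ B ∧ IsReduced (A ++ B) := by
  induction L₁ using List.reverseRecOn generalizing L₂ with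
  | nil => exact ⟨[], [], L₂, by simp, by simp, by simpa using h₂⟩
  | append_singleton L a ih =>
    rcases L₂ with - | ⟨b, M⟩
    · exact ⟨L ++ [a], [], [], by simp, by simp, by simpa using h₁⟩
    by_cases hab : a.1 = b.1 → a.2 = b.2
    · have hcons : IsReduced ([a] ++ b :: M) := List.isChain_cons_cons.2 ⟨hab, h₂⟩
      exact ⟨L ++ [a], [], b :: M, by simp, by simp, h₁.append_overlap hcons (by simp)⟩
    · obtain ⟨A, C, B, rfl, rfl, hAB⟩ :=
        ih (h₁.infix (List.prefix_append L [a]).isInfix) (h₂.infix (List.suffix_cons b M).isInfix)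
      exact ⟨A, C ++ [a], B, by simp, by simp [eq_mk_not_of_not_imp hab, invRev], hAB⟩

lemma mk_flatten_replicate (L : List (α × Bool)) (m : ℕ) :
    mk (List.replicate m L).flatten = mk L ^ m := by
  induction m with
  | zero => rfl
  | succ m ih => rw [List.replicate_succ, List.flatten_cons, ← mul_mk, ih, pow_succ']

lemma mk_conj_pow (c u : List (α × Bool)) (m : ℕ) :
    mk (c ++ u ++ invRev c) ^ m = mk (c ++ (List.replicate m u).flatten ++ invRev c) := by
  simp only [← mul_mk, ← inv_mk, conj_pow, mk_flatten_replicate]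

variable [DecidableEq α]

lemma norm_mk_of_isReduced {L : List (α × Bool)} (h : IsReduced L) : norm (mk L) = L.length := by
  rw [FreeGroup.norm, toWord_mk, h.reduce_eq]

lemma exists_toWord_mul_eq (x y : FreeGroup α) :
    ∃ A C B, x.toWord = A ++ C ∧ y.toWord = invRev C ++ B ∧ (x * y).toWord = A ++ B := by
  obtain ⟨A, C, B, hx, hy, hAB⟩ := exists_cancellation (isReduced_toWord (x := x))
    (isReduced_toWord (x := y))
  have hxy : x * y = mk (A ++ B) := by
    rw [← mk_toWord (x := x), ← mk_toWord (x := y), hx, hy]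
    simp only [← mul_mk, ← inv_mk]
    group
  exact ⟨A, C, B, hx, hy, by rw [hxy, toWord_mk, hAB.reduce_eq]⟩

lemma exists_toWord_eq_conj (g : FreeGroup α) :
    ∃ c u, IsCyclicallyReduced u ∧ g.toWord = c ++ u ++ invRev c :=
  ⟨_, _, reduceCyclically.isCyclicallyReduced isReduced_toWord,
    (reduceCyclically.conj_conjugator_reduceCyclically g.toWord).symm⟩

lemma norm_pow_le (g : FreeGroup α) (m : ℕ) : norm (g ^ m) ≤ m * norm g := by
  induction m with
  | zero => simp
  | succ m ih =>
    rw [pow_succ, add_one_mul]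
    exact (FreeGroup.norm_mul_le _ _).trans (Nat.add_le_add_right ih _)

lemma norm_pow_of_isCyclicallyReduced {u : List (α × Bool)} (h : IsCyclicallyReduced u) (m : ℕ) :
    norm (mk u ^ m) = m * u.length := by
  rw [← mk_flatten_replicate, norm_mk_of_isReduced (h.flatten_replicate m).isReduced]
  simp

lemma length_le_norm_of_isConj {v : List (α × Bool)} {g : FreeGroup α}
    (hv : IsCyclicallyReduced v) (h : IsConj g (mk v)) : v.length ≤ norm g := by
  obtain ⟨c, hc⟩ := isConj_iff.1 h
  have norm_pow_bound (m : ℕ) : m * v.length ≤ m * norm g + 2 * norm c := by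
    calc m * v.length = norm (c * g ^ m * c⁻¹) := by
          rw [← norm_pow_of_isCyclicallyReduced hv, ← hc, conj_pow]
      _ ≤ norm c + norm (g ^ m) + norm c⁻¹ :=
          (FreeGroup.norm_mul_le _ _).trans (Nat.add_le_add_right (FreeGroup.norm_mul_le _ _) _)
      _ ≤ m * norm g + 2 * norm c := by
          rw [norm_inv_eq]
          have := norm_pow_le g m
          omega
  by_contra! hlt
  have := norm_pow_bound (2 * norm c + 1)
  nlinarith

lemma length_add_length_le_norm_of_prefix {c V : List (α × Bool)} {p : FreeGroup α}
    (hcV : IsReduced (c ++ V)) (hV : V ≠ []) (h : V <+: ((mk c)⁻¹ * p).toWord) :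
    c.length + V.length ≤ norm p := by
  obtain ⟨D, hD⟩ := h
  have hred : IsReduced (c ++ V ++ D) := hcV.append_overlap (hD ▸ isReduced_toWord) hV
  have hp : p = mk (c ++ V ++ D) := by
    rw [List.append_assoc, hD, ← mul_mk, mk_toWord, mul_inv_cancel_left]
  rw [hp, norm_mk_of_isReduced hred]
  simp

lemma length_cancellation_lt {c U A C : List (α × Bool)} {p : FreeGroup α}
    (h : IsReduced (c ++ U ++ invRev c)) (hp : norm p < U.length) (hA : A ++ C = c ++ U)
    (hC : invRev C <+: ((mk c)⁻¹ * p).toWord) : C.length < U.length := by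
  by_contra! hle
  obtain ⟨D, rfl⟩ : U <:+ C :=
    List.suffix_of_suffix_length_le (List.suffix_append c U) ⟨A, hA⟩ hle
  have hcU : IsReduced (c ++ invRev U) := by
    have hinv := isReduced_invRev h
    simp only [invRev_append, invRev_invRev, ← List.append_assoc] at hinv
    exact hinv.infix (List.prefix_append _ _).isInfix
  have hU : invRev U ≠ [] := List.ne_nil_of_length_pos (by rw [invRev_length]; omega)
  have hprefix : invRev U <+: ((mk c)⁻¹ * p).toWord := by
    rw [invRev_append] at hC
    exact (List.prefix_append _ _).trans hC
  have hlength := length_add_length_le_norm_of_prefix hcU hU hprefix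
  rw [invRev_length] at hlength
  omega

lemma exists_toWord_conj_mul_eq {c U : List (α × Bool)} {p : FreeGroup α}
    (h : IsReduced (c ++ U ++ invRev c)) (hp : norm p < U.length) :
    ∃ E B, E ≠ [] ∧ E <+: U ∧ (mk (c ++ U ++ invRev c) * p).toWord = c ++ E ++ B := by
  have hmul : mk (c ++ U ++ invRev c) * p = mk (c ++ U) * ((mk c)⁻¹ * p) := by
    rw [← mul_mk, ← inv_mk, mul_assoc]
  obtain ⟨A, C, B, hA, hC, hAB⟩ := exists_toWord_mul_eq (mk (c ++ U)) ((mk c)⁻¹ * p)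
  rw [toWord_mk, (h.infix (List.prefix_append _ _).isInfix).reduce_eq] at hA
  have hCU : C.length < U.length :=
    length_cancellation_lt h hp hA.symm (hC ▸ List.prefix_append _ _)
  obtain ⟨E, rfl⟩ : C <:+ U :=
    List.suffix_of_suffix_length_le ⟨A, hA.symm⟩ (List.suffix_append c U) hCU.le
  have hE : E ≠ [] := by
    rintro rfl
    exact hCU.ne rfl
  rw [← List.append_assoc] at hA
  exact ⟨E, B, hE, List.prefix_append E C, by rw [hmul, hAB, List.append_cancel_right hA]⟩

lemma norm_conj_mul_of_toWord_eq {c u E B : List (α × Bool)} {x : FreeGroup α}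
    (h : IsReduced (c ++ u ++ E)) (hE : E ≠ []) (hx : x.toWord = c ++ E ++ B) :
    norm (mk (c ++ u ++ invRev c) * x) = u.length + norm x := by
  have hEB : IsReduced (E ++ B) :=
    (isReduced_toWord (x := x)).infix ⟨c, [], by simp [hx]⟩
  have hmul : mk (c ++ u ++ invRev c) * x = mk (c ++ u ++ E ++ B) := by
    rw [← mk_toWord (x := x), hx]
    simp only [← mul_mk, ← inv_mk]
    group
  rw [hmul, norm_mk_of_isReduced (h.append_overlap hEB hE), FreeGroup.norm, hx]
  simp only [List.length_append]
  omega

theorem norm_pow_succ_mul_of_isConj {g p : FreeGroup α} {v : List (α × Bool)}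
    (hv : IsCyclicallyReduced v) (hgv : IsConj g (mk v)) {q : ℕ} (hp : norm p < q * v.length) :
    norm (g ^ (q + 1) * p) = v.length + norm (g ^ q * p) := by
  obtain ⟨c, u, hu, hg⟩ := exists_toWord_eq_conj g
  have hcu : IsReduced (c ++ u ++ invRev c) := hg ▸ isReduced_toWord
  obtain rfl : mk (c ++ u ++ invRev c) = g := by rw [← hg, mk_toWord]
  have hug : IsConj (mk u) (mk (c ++ u ++ invRev c)) :=
    isConj_iff.2 ⟨mk c, by rw [inv_mk, mul_mk, mul_mk]⟩
  have huv : u.length = v.length := le_antisymm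
    ((length_le_norm_of_isConj hu (hug.trans hgv).symm).trans norm_mk_le)
    ((length_le_norm_of_isConj hv (hug.trans hgv)).trans norm_mk_le)
  rw [← huv] at hp ⊢
  have hq : q ≠ 0 := by
    rintro rfl
    simp at hp
  obtain ⟨E, B, hE, hEU, hx⟩ := exists_toWord_conj_mul_eq (p := p)
    (IsReduced.append_flatten_replicate_append hu hcu hq) (by simpa using hp)
  have hcuE : IsReduced (c ++ u ++ E) := by
    obtain ⟨C, hC⟩ := hEU
    refine (IsReduced.append_flatten_replicate_append hu hcu q.succ_ne_zero).infix
      ⟨[], C ++ invRev c, ?_⟩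
    simp [List.replicate_succ, ← hC]
  rw [← mk_conj_pow] at hx
  rw [pow_succ', mul_assoc, norm_conj_mul_of_toWord_eq hcuE hE hx]

end ReducedWords

lemma take_flatten_replicate {β : Type*} (l : List β) {m i : ℕ} (h : i ≤ m * l.length) :
    (List.replicate m l).flatten.take i =
      (List.replicate (i / l.length) l).flatten ++ l.take (i % l.length) := by
  rcases eq_or_ne l [] with rfl | hl
  · simp
  replace hl : 0 < l.length := List.length_pos_iff.2 hl
  induction m generalizing i with
  | zero =>
    obtain rfl : i = 0 := by simpa using h
    simp
  | succ m ih =>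
    rw [List.replicate_succ, List.flatten_cons]
    rcases lt_or_ge i l.length with hi | hi
    · rw [List.take_append_of_le_length hi.le, Nat.div_eq_of_lt hi, Nat.mod_eq_of_lt hi]
      simp
    · obtain ⟨j, rfl⟩ := Nat.exists_eq_add_of_le hi
      have hj : j ≤ m * l.length := by
        rw [add_one_mul] at h
        omega
      rw [List.take_length_add_append, ih hj, Nat.add_div_left j hl, Nat.add_mod_left,
        List.replicate_succ, List.flatten_cons, List.append_assoc]

lemma le_div_mul_of_mul_add_mul_le {n k i : ℕ} (h : k * n + n * n ≤ k * i) : n ≤ i / n * k := by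
  rcases n.eq_zero_or_pos with rfl | hn
  · simp
  by_contra! hlt
  refine h.not_gt ?_
  calc k * i ≤ k * (i / n * n + n) := by gcongr; exact (Nat.lt_div_mul_add hn).le
    _ = k * n + i / n * k * n := by ring
    _ < k * n + n * n := by gcongr

lemma LinReduced.isReduced {N : ℕ} {w : List (Letter N)} (h : LinReduced w) :
    FreeGroup.IsReduced w :=
  List.IsChain.imp (fun _ _ hab => not_not.1 (mt eq_mk_not_of_not_imp hab)) h

lemma CycReduced.isCyclicallyReduced {N : ℕ} {w : List (Letter N)} (h : CycReduced w) :
    FreeGroup.IsCyclicallyReduced w :=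
  have hww : FreeGroup.IsReduced (w ++ w) := LinReduced.isReduced h
  ⟨hww.infix (List.prefix_append w w).isInfix, (List.isChain_append.1 hww).2.2⟩

lemma CyclicStep.isConj {N : ℕ} {w v : List (Letter N)} (h : CyclicStep w v) :
    IsConj (FreeGroup.mk w) (FreeGroup.mk v) := by
  rcases h with hstep | ⟨l, m, rfl, rfl⟩
  · rw [FreeGroup.Red.exact.2 ⟨v, hstep.to_red, .refl⟩]
  · refine (isConj_iff.2 ⟨FreeGroup.mk [l], ?_⟩).symm
    simp [FreeGroup.inv_mk, FreeGroup.mul_mk, FreeGroup.invRev, linv]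

lemma CycReducesTo.isConj {N : ℕ} {w v : List (Letter N)} (h : CycReducesTo w v) :
    IsConj (FreeGroup.mk w) (FreeGroup.mk v) := by
  induction h with
  | refl => exact .refl _
  | tail _ hstep ih => exact ih.trans hstep.isConj

/-- The prefix contains `i / |w|` whole copies of `w`, and `⌈|w| / |v|⌉` of them suffice. -/
theorem reduce_append_prefix_of_infinite_word_general {α : Type*} [DecidableEq α]
    {w v : List (α × Bool)} (hv : FreeGroup.IsCyclicallyReduced v)
    (hwv : IsConj (FreeGroup.mk w) (FreeGroup.mk v)) {i : ℕ}
    (hi : w.length ≤ i / w.length * v.length) :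
    (FreeGroup.reduce (w ++ (List.replicate i w).flatten.take i)).length =
      v.length + (FreeGroup.reduce ((List.replicate i w).flatten.take i)).length := by
  rcases eq_or_ne w [] with rfl | hw
  · have hv0 : v.length = 0 :=
      Nat.le_zero.1 ((length_le_norm_of_isConj hv hwv).trans FreeGroup.norm_mk_le)
    simp [hv0]
  replace hw : 0 < w.length := List.length_pos_iff.2 hw
  have hp : FreeGroup.norm (FreeGroup.mk (w.take (i % w.length))) < i / w.length * v.length :=
    calc FreeGroup.norm (FreeGroup.mk (w.take (i % w.length)))
        ≤ (w.take (i % w.length)).length := FreeGroup.norm_mk_le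
      _ ≤ i % w.length := List.length_take_le _ _
      _ < w.length := Nat.mod_lt i hw
      _ ≤ i / w.length * v.length := hi
  have hnorm := norm_pow_succ_mul_of_isConj hv hwv hp
  rw [pow_succ', mul_assoc, ← mk_flatten_replicate, FreeGroup.mul_mk, FreeGroup.mul_mk,
    ← take_flatten_replicate w (Nat.le_mul_of_pos_right i hw)] at hnorm
  simpa only [FreeGroup.norm, FreeGroup.toWord_mk] using hnorm

/-- If `w` has length `n`, reduces cyclically to a word of length `k > 0`, and
`s` is a prefix of `w_∞` with more than `n(1 + n/k)` letters (i.e.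
`k·i > k·n + n²` where `i` is the number of letters of `s`), then
`|w s| = k + |s|`. -/
theorem reduce_append_prefix_of_infinite_word (N n k : ℕ) (hk : 0 < k)
    (w v : List (Letter N)) (hn : w.length = n)
    (hred : CycReducesTo w v) (hvc : CycReduced v) (hvk : v.length = k)
    (i : ℕ) (hi : k * n + n * n < k * i) :
    (FreeGroup.reduce (w ++ infTake w i)).length
      = k + (FreeGroup.reduce (infTake w i)).length := by
  subst hn hvk
  exact reduce_append_prefix_of_infinite_word_general hvc.isCyclicallyReduced hred.isConj
    (le_div_mul_of_mul_add_mul_le hi.le)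

end NCC
end
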